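/- Let p ∈ (0,1) be fixed and let m ≥ 5 be a fixed integer. Then with high probability, n + (1−o(1))·n/(4(m−1)·log_{1/(1−p)} n) ≤ sat(G(n,p), C_m) ≤ n + (1+o(1))·n/(2·log_{1/(1−p)} n). -/

import Mathlib

open MeasureTheory Filter Real

/-- The index type of potential edges of a graph on `Fin n`. -/
abbrev EdgeType (n : ℕ) := {e : Sym2 (Fin n) // ¬ e.IsDiag}

/-- The product Bernoulli measure on edge-indicator functions: the binomial
random graph `G(n,p)`. -/
noncomputable def erMeasure (n : ℕ) (p : ℝ) : Measure (EdgeType n → Bool) :=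
  Measure.pi fun _ => (PMF.bernoulli (min (Real.toNNReal p) 1) (min_le_right _ _)).toMeasure

/-- The simple graph determined by an edge-indicator function. -/
def graphOf {n : ℕ} (ω : EdgeType n → Bool) : SimpleGraph (Fin n) :=
  SimpleGraph.fromEdgeSet {e | ∃ h : ¬ e.IsDiag, ω ⟨e, h⟩ = true}

/-- `H` contains a (not necessarily induced) copy of `F`. -/
def ContainsCopy {α β : Type*} (F : SimpleGraph α) (H : SimpleGraph β) : Prop :=
  ∃ f : α → β, Function.Injective f ∧ ∀ ⦃a b⦄, F.Adj a b → H.Adj (f a) (f b)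

/-- `H` is `F`-saturated in `G`: `H` is a spanning subgraph of `G` that is `F`-free,
and adding any edge of `G` missing from `H` creates a copy of `F`. -/
def IsSaturatedIn {V : Type*} {α : Type*} (G H : SimpleGraph V) (F : SimpleGraph α) : Prop :=
  H ≤ G ∧ ¬ ContainsCopy F H ∧
    ∀ v w : V, G.Adj v w → ¬ H.Adj v w →
      ContainsCopy F (H ⊔ SimpleGraph.fromEdgeSet {s(v, w)})

/-- The saturation number `sat(G,F)`: the minimum number of edges of an
`F`-saturated spanning subgraph of `G`. -/
noncomputable def satNum {V α : Type*} (G : SimpleGraph V) (F : SimpleGraph α) : ℕ :=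
  sInf {k | ∃ H : SimpleGraph V, IsSaturatedIn G H F ∧ H.edgeSet.ncard = k}

/-- The cycle `C_m`, as a graph on `ZMod m`. -/
def cycGraph (m : ℕ) : SimpleGraph (ZMod m) :=
  SimpleGraph.fromRel (fun a b => a = b + 1)

/-!
Write `L = log_{1/(1-p)} n`. Four typical properties of `G = G(n, p)` carry the proof: for some
`t = (2 + o(1))L`, every set of `t` vertices spans more than `t` edges and any two disjoint
`t`-sets are joined by an edge; any `m` vertices have linearly many common neighbours; and every
set of `n^{1-δ}` vertices contains an independent set of size `k = (2 - o(1))L`.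

Lower bound. Let `H` be `C_m`-saturated in `G`, so that the ends of an edge of `G` missing from `H`
are joined in `H` by a path of length `m - 1`. Then `H` has a spanning forest of depth at most
`m - 1` with few roots, and is therefore a forest hanging off a core whose size is governed by the
number of edges of `H` outside the spanning forest, i.e. by the excess `e(H) - n`. The length of a
path between vertices hanging off the core is compared with the sum of their heights: deep vertices
with distinct roots are not adjacent in `G`, so that only `o(n)` vertices are deep, and shallow
vertices with the same root are adjacent in `G` only along the forest, so that there are fewer than
`t` of them. Hence the core has at least `(1 - o(1)) n / t` vertices.

Upper bound. Attach almost all vertices as leaves to about `n / k` centres, the leaves of each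
centre forming an independent set of size `k`, and join every centre to two fixed vertices of a
clique of size `m - 2`. Any two nonadjacent vertices of this graph, except two leaves of the same
centre, are joined by a path of length `m - 1`; completing it to a saturated graph adds only
`o(n / L)` edges.

The large independent sets come from McDiarmid's inequality applied to the maximum number of
edge-disjoint independent `k`-sets.
-/

section BoundedDifferences

open ProbabilityTheory
open scoped NNReal

theorem abs_sub_le_sum_of_bounded_differences {ι : Type*} [Fintype ι] [DecidableEq ι]
    {X : ι → Type*} {f : (∀ i, X i) → ℝ} {c : ι → ℝ≥0}
    (hf : ∀ x i a, |f (Function.update x i a) - f x| ≤ c i) (x y : ∀ i, X i) :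
    |f x - f y| ≤ ∑ i, (c i : ℝ) := by
  suffices h : ∀ s : Finset ι, |f (s.piecewise x y) - f y| ≤ ∑ i ∈ s, (c i : ℝ) by
    simpa using h Finset.univ
  intro s
  induction s using Finset.induction_on with
  | empty => simp
  | insert i s hi ih =>
    rw [Finset.piecewise_insert, Finset.sum_insert hi]
    exact (abs_sub_le _ (f (s.piecewise x y)) _).trans (add_le_add (hf _ _ _) ih)

theorem hasSubgaussianMGF_of_abs_sub_le {α : Type*} [MeasurableSpace α] {μ : Measure α}
    [IsProbabilityMeasure μ] {f : α → ℝ} (hfm : Measurable f) {c : ℝ≥0}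
    (hf : ∀ a a', |f a - f a'| ≤ c) :
    HasSubgaussianMGF (fun a => f a - ∫ a', f a' ∂μ) ((c / 2) ^ 2) μ := by
  have hα : Nonempty α := nonempty_of_isProbabilityMeasure μ
  have hbdd : BddBelow (Set.range f) :=
    ⟨f hα.some - c, Set.forall_mem_range.2 fun a => by linarith [(abs_le.1 (hf hα.some a)).2]⟩
  have hmem : ∀ᵐ a ∂μ, f a ∈ Set.Icc (⨅ a, f a) ((⨅ a, f a) + c) :=
    Eventually.of_forall fun a => ⟨ciInf_le hbdd a, by
      rw [← sub_le_iff_le_add]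
      exact le_ciInf fun a' => by linarith [(abs_le.1 (hf a a')).2]⟩
  simpa using hasSubgaussianMGF_of_mem_Icc hfm.aemeasurable hmem

theorem hasSubgaussianMGF_prod_of_bounded_differences {α β : Type*} [MeasurableSpace α]
    [MeasurableSpace β] {μ : Measure α} {ν : Measure β} [IsProbabilityMeasure μ]
    [IsProbabilityMeasure ν] {f : α × β → ℝ} (hfm : Measurable f) {C : ℝ} (hC : ∀ z, |f z| ≤ C)
    {c K : ℝ≥0} (hf : ∀ a a' b, |f (a, b) - f (a', b)| ≤ c)
    (hK : HasSubgaussianMGF (fun b => ∫ a, f (a, b) ∂μ - ∫ z, f z ∂(μ.prod ν)) K ν) :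
    HasSubgaussianMGF (fun z => f z - ∫ z', f z' ∂(μ.prod ν)) ((c / 2) ^ 2 + K) (μ.prod ν) := by
  have hint (t : ℝ) :
      Integrable (fun z => exp (t * (f z - ∫ z', f z' ∂(μ.prod ν)))) (μ.prod ν) := by
    refine integrable_exp_mul_of_mem_Icc (a := -C - ∫ z', f z' ∂(μ.prod ν))
      (b := C - ∫ z', f z' ∂(μ.prod ν)) (by fun_prop) (Eventually.of_forall fun z => ?_)
    exact ⟨sub_le_sub_right (abs_le.1 (hC z)).1 _, sub_le_sub_right (abs_le.1 (hC z)).2 _⟩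
  refine ⟨hint, fun t => ?_⟩
  have hfiber (b : β) :
      ∫ a, exp (t * (f (a, b) - ∫ a', f (a', b) ∂μ)) ∂μ ≤ exp ((c / 2 : ℝ) ^ 2 * t ^ 2 / 2) := by
    simpa [mgf] using (hasSubgaussianMGF_of_abs_sub_le (f := fun a => f (a, b)) (by fun_prop)
      fun a a' => hf a a' b).mgf_le t
  set E := ∫ z, f z ∂(μ.prod ν)
  calc mgf (fun z => f z - E) (μ.prod ν) t
      = ∫ b, exp (t * (∫ a, f (a, b) ∂μ - E)) *
          ∫ a, exp (t * (f (a, b) - ∫ a', f (a', b) ∂μ)) ∂μ ∂ν := by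
        rw [mgf, integral_prod_symm _ (hint t)]
        refine integral_congr_ae (Eventually.of_forall fun b => ?_)
        simp only [← integral_const_mul, ← exp_add]
        congr with a
        ring_nf
    _ ≤ ∫ b, exp (t * (∫ a, f (a, b) ∂μ - E)) * exp ((c / 2 : ℝ) ^ 2 * t ^ 2 / 2) ∂ν := by
        refine integral_mono_of_nonneg (Eventually.of_forall fun b => ?_)
          ((hK.integrable_exp_mul t).mul_const _) (Eventually.of_forall fun b => ?_)
        · exact mul_nonneg (exp_nonneg _) (integral_nonneg fun a => exp_nonneg _)
        · exact mul_le_mul_of_nonneg_left (hfiber b) (exp_nonneg _)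
    _ = mgf (fun b => ∫ a, f (a, b) ∂μ - E) ν t * exp ((c / 2 : ℝ) ^ 2 * t ^ 2 / 2) := by
        rw [integral_mul_const, mgf]
    _ ≤ exp (K * t ^ 2 / 2) * exp ((c / 2 : ℝ) ^ 2 * t ^ 2 / 2) :=
        mul_le_mul_of_nonneg_right (hK.mgf_le t) (exp_nonneg _)
    _ = exp (((c / 2) ^ 2 + K : ℝ≥0) * t ^ 2 / 2) := by
        rw [← exp_add]
        push_cast
        ring_nf

theorem hasSubgaussianMGF_comp_sub_integral {α β : Type*} [MeasurableSpace α]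
    [MeasurableSpace β] {μ : Measure α} {ν : Measure β} {e : α ≃ᵐ β} (he : MeasurePreserving e μ ν)
    {f : β → ℝ} {K : ℝ≥0} (hf : HasSubgaussianMGF (fun y => f y - ∫ z, f z ∂ν) K ν) :
    HasSubgaussianMGF (fun x => f (e x) - ∫ z, f (e z) ∂μ) K μ := by
  rw [he.integral_comp']
  exact HasSubgaussianMGF.of_map (X := fun y => f y - ∫ z, f z ∂ν) he.measurable.aemeasurable
    (he.map_eq.symm ▸ hf)

theorem hasSubgaussianMGF_pi_fin_of_bounded_differences {n : ℕ} {X : Fin n → Type*}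
    [∀ i, MeasurableSpace (X i)] (μ : ∀ i, Measure (X i)) [∀ i, IsProbabilityMeasure (μ i)]
    {f : (∀ i, X i) → ℝ} (hfm : Measurable f) {C : ℝ} (hC : ∀ x, |f x| ≤ C) {c : Fin n → ℝ≥0}
    (hf : ∀ x i a, |f (Function.update x i a) - f x| ≤ c i) :
    HasSubgaussianMGF (fun x => f x - ∫ y, f y ∂Measure.pi μ) (∑ i, (c i / 2) ^ 2)
      (Measure.pi μ) := by
  induction n with
  | zero =>
    have hconst (x : ∀ i : Fin 0, X i) : f x - ∫ y, f y ∂Measure.pi μ = 0 := by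
      simp [fun y : ∀ i : Fin 0, X i => congrArg f (Subsingleton.elim y x)]
    simpa only [hconst, Finset.univ_eq_empty, Finset.sum_empty] using
      HasSubgaussianMGF.fun_zero (μ := Measure.pi μ)
  | succ n ih =>
    let e := MeasurableEquiv.piFinSuccAbove X 0
    let ν := Measure.pi fun j => μ (Fin.succAbove 0 j)
    have he : MeasurePreserving e (Measure.pi μ) ((μ 0).prod ν) :=
      measurePreserving_piFinSuccAbove μ 0
    let g : X 0 × (∀ j, X (Fin.succAbove 0 j)) → ℝ := fun z => f (Fin.insertNth 0 z.1 z.2)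
    have hge (x : ∀ i, X i) : g (e x) = f x := congrArg f (e.symm_apply_apply x)
    have hgm : Measurable g := hfm.comp e.symm.measurable
    have hgint (b) : Integrable (fun a => g (a, b)) (μ 0) :=
      Integrable.of_bound (hgm.comp measurable_prodMk_right).aestronglyMeasurable C
        (Eventually.of_forall fun a => hC _)
    have hnorm {h : X 0 → ℝ} {K : ℝ} (hK : ∀ a, |h a| ≤ K) : |∫ a, h a ∂μ 0| ≤ K := by
      simpa using norm_integral_le_of_norm_le_const (μ := μ 0) (f := h) (Eventually.of_forall hK)
    have hfiber := ih (fun j => μ (Fin.succAbove 0 j)) (f := fun b => ∫ a, g (a, b) ∂μ 0)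
      (c := fun j => c (Fin.succAbove 0 j)) hgm.stronglyMeasurable.integral_prod_left.measurable
      (fun b => hnorm fun a => hC _) (fun b j y => by
        rw [← integral_sub (hgint _) (hgint _)]
        exact hnorm fun a => by
          simpa only [g, Fin.insertNth_update] using hf (Fin.insertNth 0 a b) _ y)
    have hE : ∫ b, ∫ a, g (a, b) ∂μ 0 ∂ν = ∫ z, g z ∂((μ 0).prod ν) :=
      (integral_prod_symm _ (Integrable.of_bound (by fun_prop) C
        (Eventually.of_forall fun z => hC _))).symm
    have hg := hasSubgaussianMGF_prod_of_bounded_differences (μ := μ 0) (c := c 0) hgm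
      (fun z => hC _) (fun a a' b => by
        simpa only [g, Fin.update_insertNth] using hf (Fin.insertNth 0 a' b) 0 a) (hE ▸ hfiber)
    rw [Fin.sum_univ_succAbove _ 0]
    simpa only [hge] using hasSubgaussianMGF_comp_sub_integral he hg

theorem hasSubgaussianMGF_of_bounded_differences {ι : Type*} [Fintype ι] [DecidableEq ι]
    {X : ι → Type*} [∀ i, MeasurableSpace (X i)] (μ : ∀ i, Measure (X i))
    [∀ i, IsProbabilityMeasure (μ i)] {f : (∀ i, X i) → ℝ} (hfm : Measurable f) {c : ι → ℝ≥0}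
    (hf : ∀ x i a, |f (Function.update x i a) - f x| ≤ c i) :
    HasSubgaussianMGF (fun x => f x - ∫ y, f y ∂Measure.pi μ) (∑ i, (c i / 2) ^ 2)
      (Measure.pi μ) := by
  obtain ⟨x₀⟩ := nonempty_of_isProbabilityMeasure (Measure.pi μ)
  have hC (x : ∀ i, X i) : |f x| ≤ |f x₀| + ∑ i, (c i : ℝ) := by
    linarith [abs_sub_abs_le_abs_sub (f x) (f x₀), abs_sub_le_sum_of_bounded_differences hf x x₀]
  let σ := (Fintype.equivFin ι).symm
  let e := MeasurableEquiv.piCongrLeft X σ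
  have he : MeasurePreserving e (Measure.pi fun j => μ (σ j)) (Measure.pi μ) :=
    measurePreserving_piCongrLeft μ σ
  have h := hasSubgaussianMGF_pi_fin_of_bounded_differences (fun j => μ (σ j)) (f := f ∘ e)
    (c := fun j => c (σ j)) (hfm.comp e.measurable) (fun x => hC _) (fun x j a => by
      have hupd : e (Function.update x j a) = Function.update (e x) (σ j) a := by
        ext i
        obtain ⟨j', rfl⟩ := σ.surjective i
        rcases eq_or_ne j' j with rfl | hj
        · simp [e, MeasurableEquiv.piCongrLeft_apply_apply]
        · simp [e, MeasurableEquiv.piCongrLeft_apply_apply, hj]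
      simpa only [Function.comp_apply, hupd] using hf (e x) (σ j) a)
  simpa [σ.sum_comp fun i => (c i / 2) ^ 2] using hasSubgaussianMGF_comp_sub_integral (he.symm e) h

theorem measureReal_le_sub_le_of_bounded_differences {ι : Type*} [Fintype ι] [DecidableEq ι]
    {X : ι → Type*} [∀ i, MeasurableSpace (X i)] (μ : ∀ i, Measure (X i))
    [∀ i, IsProbabilityMeasure (μ i)] {f : (∀ i, X i) → ℝ} (hfm : Measurable f) {c : ι → ℝ≥0}
    (hf : ∀ x i a, |f (Function.update x i a) - f x| ≤ c i) {s : ℝ} (hs : 0 ≤ s) :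
    (Measure.pi μ).real {x | f x ≤ ∫ y, f y ∂Measure.pi μ - s} ≤
      exp (-2 * s ^ 2 / ∑ i, (c i : ℝ) ^ 2) := by
  convert (hasSubgaussianMGF_of_bounded_differences μ hfm hf).neg.measure_ge_le hs using 2
  · ext x
    simp [le_sub_comm]
  · push_cast
    simp only [div_pow, ← Finset.sum_div]
    field_simp

end BoundedDifferences

open scoped Finset

theorem sq_card_le_mul_card_not_adj_of_cliqueFree {V : Type*} [Fintype V] {G : SimpleGraph V}
    [DecidableRel G.Adj] {r : ℕ} (hG : G.CliqueFree (r + 1)) :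
    Fintype.card V ^ 2 ≤ r * #{x : V × V | ¬ G.Adj x.1 x.2} := by
  classical
  have hedges : 2 * r * #G.edgeFinset ≤ (r - 1) * Fintype.card V ^ 2 := by
    refine (Nat.mul_le_mul_left _ hG.card_edgeFinset_le).trans ?_
    rw [← SimpleGraph.card_edgeFinset_turanGraph]
    exact SimpleGraph.mul_card_edgeFinset_turanGraph_le
  have hadj : #{x : V × V | G.Adj x.1 x.2} = 2 * #G.edgeFinset := by
    rw [← G.sum_degrees_eq_twice_card_edges, Finset.card_filter, ← Finset.univ_product_univ,
      Finset.sum_product]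
    simp [← SimpleGraph.card_neighborFinset_eq_degree, SimpleGraph.neighborFinset_eq_filter]
  have hsplit := Finset.card_filter_add_card_filter_not (s := Finset.univ)
    fun x : V × V => G.Adj x.1 x.2
  rw [hadj, Finset.card_univ, Fintype.card_prod, ← sq] at hsplit
  rcases r with - | r
  · have := SimpleGraph.cliqueFree_one.1 hG
    simp
  · rw [Nat.add_sub_cancel] at hedges
    nlinarith

section Packing

variable {ι κ : Type*} [DecidableEq ι] [DecidableEq κ] (P : κ → Finset ι)

/-- The packing number of the subfamily of `P` indexed by `A`: the largest number of pairwise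
disjoint members. -/
def packingNumber (A : Finset κ) : ℕ :=
  {S ∈ A.powerset | ∀ a ∈ S, ∀ b ∈ S, a ≠ b → Disjoint (P a) (P b)}.sup Finset.card

variable {P}

theorem card_le_packingNumber {A S : Finset κ} (hS : S ⊆ A)
    (hdisj : ∀ a ∈ S, ∀ b ∈ S, a ≠ b → Disjoint (P a) (P b)) : #S ≤ packingNumber P A :=
  Finset.le_sup (f := Finset.card) (by simpa [hS] using hdisj)

theorem packingNumber_le_succ {A B : Finset κ} {i : ι} (h : ∀ a ∈ A, a ∉ B → i ∈ P a) :
    packingNumber P A ≤ packingNumber P B + 1 := by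
  refine Finset.sup_le fun S hS => ?_
  simp only [Finset.mem_filter, Finset.mem_powerset] at hS
  obtain ⟨hSA, hdisj⟩ := hS
  have hout : #(S \ B) ≤ 1 := Finset.card_le_one.2 fun a ha b hb => by
    simp only [Finset.mem_sdiff] at ha hb
    by_contra hab
    exact Finset.disjoint_left.1 (hdisj a ha.1 b hb.1 hab) (h a (hSA ha.1) ha.2)
      (h b (hSA hb.1) hb.2)
  have hin : #(S ∩ B) ≤ packingNumber P B :=
    card_le_packingNumber Finset.inter_subset_right fun a ha b hb =>
      hdisj a (Finset.mem_inter.1 ha).1 b (Finset.mem_inter.1 hb).1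
  have := Finset.card_sdiff_add_card_inter S B
  omega

/-- A packing is a clique in the disjointness graph, so Turán's theorem applies. -/
theorem sq_card_le_packingNumber_mul {A : Finset κ} (hP : ∀ a ∈ A, (P a).Nonempty) :
    #A ^ 2 ≤
      packingNumber P A * #{x ∈ A ×ˢ A | ¬ Disjoint (P x.1) (P x.2)} := by
  let G : SimpleGraph A :=
    { Adj a b := Disjoint (P a) (P b)
      symm := ⟨fun _ _ h => h.symm⟩
      loopless := ⟨fun a h => (hP a a.2).ne_empty (disjoint_self.1 h)⟩ }
  have : DecidableRel G.Adj := fun a b => inferInstanceAs (Decidable (Disjoint (P a) (P b)))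
  have hfree : G.CliqueFree (packingNumber P A + 1) := fun S hS => by
    have hle := card_le_packingNumber (P := P) (S := S.map (Function.Embedding.subtype _)) (A := A)
      (by intro x hx; simp only [Finset.mem_map] at hx; obtain ⟨a, -, rfl⟩ := hx; exact a.2)
      (by
        simp only [Finset.mem_map, Function.Embedding.subtype_apply]
        rintro _ ⟨a, ha, rfl⟩ _ ⟨b, hb, rfl⟩ hab
        exact hS.isClique ha hb (fun h => hab (congrArg _ h)))
    rw [Finset.card_map, hS.card_eq] at hle
    omega
  have hcard := sq_card_le_mul_card_not_adj_of_cliqueFree hfree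
  rw [Fintype.card_coe] at hcard
  refine hcard.trans (Nat.mul_le_mul_left _ ?_)
  refine Finset.card_le_card_of_injOn (fun x => (x.1, x.2)) (fun x hx => ?_) ?_
  · simpa [G] using hx
  · exact (Subtype.val_injective.prodMap Subtype.val_injective).injOn

theorem two_mul_mul_card_sub_le_packingNumber {A : Finset κ} (hP : ∀ a ∈ A, (P a).Nonempty)
    (τ : ℝ) :
    2 * τ * #A - τ ^ 2 * #{x ∈ A ×ˢ A | ¬ Disjoint (P x.1) (P x.2)} ≤ packingNumber P A := by
  have hturan : (#A : ℝ) ^ 2 ≤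
      packingNumber P A * #{x ∈ A ×ˢ A | ¬ Disjoint (P x.1) (P x.2)} := by
    exact_mod_cast sq_card_le_packingNumber_mul hP
  rcases (Nat.cast_nonneg _ : (0 : ℝ) ≤ #{x ∈ A ×ˢ A | ¬ Disjoint (P x.1) (P x.2)}).eq_or_lt
    with hD | hD
  · have hA : (#A : ℝ) = 0 := by
      rw [← hD, mul_zero] at hturan
      exact pow_eq_zero_iff two_ne_zero |>.1 (hturan.antisymm (sq_nonneg _))
    rw [hA, ← hD]
    simp
  · refine le_of_mul_le_mul_right ?_ hD
    linarith [sq_nonneg ((#A : ℝ) - τ * #{x ∈ A ×ˢ A | ¬ Disjoint (P x.1) (P x.2)})]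

end Packing

section Bernoulli

variable {ι : Type*} [Fintype ι] (μ : Measure Bool) [IsProbabilityMeasure μ]

theorem measureReal_pi_forall_mem_eq (F : Finset ι) (b : Bool) :
    (Measure.pi fun _ : ι => μ).real {ω | ∀ i ∈ F, ω i = b} = μ.real {b} ^ #F := by
  have hset : {ω : ι → Bool | ∀ i ∈ F, ω i = b} = (F : Set ι).pi fun _ => {b} := by
    ext ω
    simp [Set.mem_pi]
  rw [hset, measureReal_def, Measure.pi_pi_finset]
  simp [measureReal_def]

variable [DecidableEq ι]

theorem integral_card_filter_forall_mem_eq {α : Type*} (s : Finset α) (F : α → Finset ι)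
    (b : Bool) :
    ∫ ω, (#{a ∈ s | ∀ i ∈ F a, ω i = b} : ℝ) ∂Measure.pi (fun _ : ι => μ) =
      ∑ a ∈ s, μ.real {b} ^ #(F a) := by
  classical
  simp only [Finset.card_filter, Nat.cast_sum]
  rw [integral_finsetSum _ fun _ _ => Integrable.of_finite]
  refine Finset.sum_congr rfl fun a _ => ?_
  rw [← measureReal_pi_forall_mem_eq μ (F a) b,
    ← integral_indicator_one (Set.toFinite _).measurableSet]
  simp [Set.indicator_apply]

variable {κ : Type*} [Fintype κ]

/-- The indices of the members of the family `P` on which `ω` vanishes. -/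
def vanishing (P : κ → Finset ι) (ω : ι → Bool) : Finset κ := {a | ∀ i ∈ P a, ω i = false}

theorem filter_not_disjoint_vanishing_product (P : κ → Finset ι) (ω : ι → Bool) :
    {x ∈ vanishing P ω ×ˢ vanishing P ω | ¬ Disjoint (P x.1) (P x.2)} =
      {x ∈ ({x | ¬ Disjoint (P x.1) (P x.2)} : Finset (κ × κ)) |
        ∀ i ∈ P x.1 ∪ P x.2, ω i = false} := by
  ext x
  simp only [vanishing, Finset.mem_filter, Finset.mem_product, Finset.mem_univ, true_and,
    Finset.mem_union, or_imp, forall_and]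
  exact and_comm

variable [DecidableEq κ]

theorem abs_packingNumber_vanishing_update_sub_le (P : κ → Finset ι) (ω : ι → Bool) (i : ι)
    (b : Bool) :
    |(packingNumber P (vanishing P (Function.update ω i b)) : ℝ) -
      packingNumber P (vanishing P ω)| ≤ 1 := by
  have hle {ω ω' : ι → Bool} (h : ∀ j, j ≠ i → ω j = ω' j) :
      packingNumber P (vanishing P ω) ≤ packingNumber P (vanishing P ω') + 1 :=
    packingNumber_le_succ (i := i) fun a ha ha' => by
      simp only [vanishing, Finset.mem_filter_univ] at ha ha'
      by_contra hi
      exact ha' fun j hj => h j (ne_of_mem_of_not_mem hj hi) ▸ ha j hj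
  have h₁ := hle (ω := Function.update ω i b) (ω' := ω) fun j hj => by simp [hj]
  have h₂ := hle (ω := ω) (ω' := Function.update ω i b) fun j hj => by simp [hj]
  rw [abs_sub_le_iff]
  constructor <;> rw [sub_le_iff_le_add'] <;> exact_mod_cast (by omega)

theorem sq_sum_div_le_integral_packingNumber {P : κ → Finset ι} (hP : ∀ a, (P a).Nonempty) :
    (∑ a, μ.real {false} ^ #(P a)) ^ 2 /
        ∑ x : κ × κ with ¬ Disjoint (P x.1) (P x.2), μ.real {false} ^ #(P x.1 ∪ P x.2) ≤
      ∫ ω, (packingNumber P (vanishing P ω) : ℝ) ∂Measure.pi (fun _ : ι => μ) := by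
  have hquad (τ : ℝ) :
      2 * τ * ∑ a, μ.real {false} ^ #(P a) - τ ^ 2 *
        ∑ x : κ × κ with ¬ Disjoint (P x.1) (P x.2), μ.real {false} ^ #(P x.1 ∪ P x.2) ≤
      ∫ ω, (packingNumber P (vanishing P ω) : ℝ) ∂Measure.pi (fun _ : ι => μ) := by
    rw [← integral_card_filter_forall_mem_eq μ _ P,
      ← integral_card_filter_forall_mem_eq μ _ fun x : κ × κ => P x.1 ∪ P x.2,
      ← integral_const_mul, ← integral_const_mul,
      ← integral_sub Integrable.of_finite Integrable.of_finite]
    refine integral_mono_ae Integrable.of_finite Integrable.of_finite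
      (Eventually.of_forall fun ω => ?_)
    have h := two_mul_mul_card_sub_le_packingNumber (A := vanishing P ω) (fun a _ => hP a) τ
    rw [filter_not_disjoint_vanishing_product] at h
    exact h
  generalize ∑ a, μ.real {false} ^ #(P a) = E at hquad ⊢
  generalize ∑ x : κ × κ with ¬ Disjoint (P x.1) (P x.2), μ.real {false} ^ #(P x.1 ∪ P x.2) = Δ
    at hquad ⊢
  convert hquad (E / Δ) using 1
  rcases eq_or_ne Δ 0 with h | h
  · simp [h]
  · field_simp
    ring

omit [DecidableEq κ] in
/-- A second-moment form of Janson's inequality: the packing number of the vanishing members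
changes by at most one with each coordinate, so McDiarmid's inequality applies to it. -/
theorem measureReal_pi_forall_exists_true_le {P : κ → Finset ι} (hP : ∀ a, (P a).Nonempty) :
    (Measure.pi fun _ : ι => μ).real {ω | ∀ a, ∃ i ∈ P a, ω i = true} ≤
      exp (-2 * ((∑ a, μ.real {false} ^ #(P a)) ^ 2 /
        ∑ x : κ × κ with ¬ Disjoint (P x.1) (P x.2), μ.real {false} ^ #(P x.1 ∪ P x.2)) ^ 2 /
        Fintype.card ι) := by
  classical
  let Y (ω : ι → Bool) : ℝ := packingNumber P (vanishing P ω)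
  set s := (∑ a, μ.real {false} ^ #(P a)) ^ 2 /
    ∑ x : κ × κ with ¬ Disjoint (P x.1) (P x.2), μ.real {false} ^ #(P x.1 ∪ P x.2)
  have hs : 0 ≤ s := div_nonneg (sq_nonneg _) (Finset.sum_nonneg fun _ _ => by positivity)
  calc (Measure.pi fun _ : ι => μ).real {ω | ∀ a, ∃ i ∈ P a, ω i = true}
      ≤ (Measure.pi fun _ : ι => μ).real
          {ω | Y ω ≤ ∫ ω', Y ω' ∂Measure.pi (fun _ : ι => μ) - s} := by
        refine measureReal_mono fun ω hω => ?_
        have hempty : vanishing P ω = ∅ := by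
          simpa [vanishing, Finset.filter_eq_empty_iff] using hω
        have hY : Y ω = 0 := by simp [Y, hempty, packingNumber]
        suffices s ≤ ∫ ω', Y ω' ∂Measure.pi (fun _ : ι => μ) by simpa [hY]
        exact sq_sum_div_le_integral_packingNumber μ hP
    _ ≤ exp (-2 * s ^ 2 / ∑ _i : ι, ((1 : NNReal) : ℝ) ^ 2) :=
        measureReal_le_sub_le_of_bounded_differences _ (measurable_of_finite _)
          (c := fun _ => 1) (abs_packingNumber_vanishing_update_sub_le P) hs
    _ = exp (-2 * s ^ 2 / Fintype.card ι) := by simp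

end Bernoulli

section DisjointBlocks

variable {ι κ : Type*} [Fintype ι] [DecidableEq ι] (μ : Measure Bool) [IsProbabilityMeasure μ]

theorem card_filter_forall_mem_eq_update_le {s : Finset κ} {F : κ → Finset ι} {ω ω' : ι → Bool}
    {i : ι} {b : Bool} (hF : (s : Set κ).PairwiseDisjoint F) (hω : ∀ j, j ≠ i → ω j = ω' j) :
    #{a ∈ s | ∀ j ∈ F a, ω j = b} ≤
      #{a ∈ s | ∀ j ∈ F a, ω' j = b} + if i ∈ s.biUnion F then 1 else 0 := by
  classical
  have hsub : {a ∈ s | ∀ j ∈ F a, ω j = b} ⊆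
      {a ∈ s | ∀ j ∈ F a, ω' j = b} ∪ {a ∈ s | i ∈ F a} := fun a ha => by
    simp only [Finset.mem_filter, Finset.mem_union] at ha ⊢
    by_cases hi : i ∈ F a
    · exact .inr ⟨ha.1, hi⟩
    · exact .inl ⟨ha.1, fun j hj => hω j (ne_of_mem_of_not_mem hj hi) ▸ ha.2 j hj⟩
  have hone : #{a ∈ s | i ∈ F a} ≤ if i ∈ s.biUnion F then 1 else 0 := by
    split_ifs with hi
    · simp only [Finset.card_le_one, Finset.mem_filter]
      intro a ha a' ha'
      exact hF.elim_finset ha.1 ha'.1 i ha.2 ha'.2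
    · simpa [Finset.filter_eq_empty_iff] using hi
  exact (Finset.card_le_card hsub).trans
    ((Finset.card_union_le _ _).trans (Nat.add_le_add_left hone _))

theorem measureReal_card_filter_forall_mem_eq_le {s : Finset κ} {F : κ → Finset ι}
    (hF : (s : Set κ).PairwiseDisjoint F) (b : Bool) {x : ℝ} (hx : 0 ≤ x) :
    (Measure.pi fun _ : ι => μ).real
        {ω | (#{a ∈ s | ∀ i ∈ F a, ω i = b} : ℝ) ≤ ∑ a ∈ s, μ.real {b} ^ #(F a) - x} ≤
      exp (-2 * x ^ 2 / ∑ a ∈ s, (#(F a) : ℝ)) := by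
  have h := measureReal_le_sub_le_of_bounded_differences (fun _ : ι => μ)
    (f := fun ω => (#{a ∈ s | ∀ i ∈ F a, ω i = b} : ℝ)) (measurable_of_finite _)
    (c := fun i => ((if i ∈ s.biUnion F then 1 else 0 : ℕ) : NNReal)) (fun ω i c => ?_) hx
  · have hsum : ∑ i, (((if i ∈ s.biUnion F then 1 else 0 : ℕ) : NNReal) : ℝ) ^ 2 =
        ∑ a ∈ s, (#(F a) : ℝ) := by
      rw [← Nat.cast_sum, ← Finset.card_biUnion hF]
      simp [apply_ite, -Finset.mem_biUnion]
    rwa [integral_card_filter_forall_mem_eq, hsum] at h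
  · rw [abs_sub_le_iff, sub_le_iff_le_add', sub_le_iff_le_add', NNReal.coe_natCast]
    constructor
    · exact_mod_cast card_filter_forall_mem_eq_update_le hF fun j hj =>
        Function.update_of_ne hj c ω
    · exact_mod_cast card_filter_forall_mem_eq_update_le hF fun j hj =>
        (Function.update_of_ne hj c ω).symm

end DisjointBlocks

section RandomGraph

theorem mem_edgeSet_graphOf {n : ℕ} {ω : EdgeType n → Bool} {e : Sym2 (Fin n)} :
    e ∈ (graphOf ω).edgeSet ↔ ∃ h : ¬ e.IsDiag, ω ⟨e, h⟩ = true := by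
  simp only [graphOf, SimpleGraph.edgeSet_fromEdgeSet]
  simp +contextual

theorem exists_erMeasure_eq_pi {p : ℝ} (hp0 : 0 ≤ p) (hp1 : p ≤ 1) :
    ∃ μ : Measure Bool, IsProbabilityMeasure μ ∧ μ.real {true} = p ∧ μ.real {false} = 1 - p ∧
      ∀ n, erMeasure n p = Measure.pi fun _ => μ := by
  refine ⟨_, inferInstance, ?_, ?_, fun n => rfl⟩ <;>
    rw [measureReal_def, PMF.toMeasure_apply_singleton _ _ (measurableSet_singleton _)]
  · change ((min p.toNNReal 1 : NNReal) : ENNReal).toReal = p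
    simp [hp0, hp1]
  · change ((1 - min p.toNNReal 1 : NNReal) : ENNReal).toReal = 1 - p
    simp [hp0, hp1]

end RandomGraph

section Pairs

variable {V : Type*} [DecidableEq V]

/-- The unordered pairs of distinct elements of `A`, i.e. the potential edges inside `A`. -/
def pairsIn (A : Finset V) : Finset (Sym2 V) := {e ∈ A.sym2 | ¬ e.IsDiag}

theorem mk_mem_pairsIn {A : Finset V} {a b : V} :
    s(a, b) ∈ pairsIn A ↔ (a ∈ A ∧ b ∈ A) ∧ a ≠ b := by
  simp [pairsIn]

theorem card_pairsIn (A : Finset V) : #(pairsIn A) = (#A).choose 2 := by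
  rw [← Sym2.card_image_offDiag]
  congr 1
  ext e
  induction e with
  | _ a b =>
    simp only [mk_mem_pairsIn, Finset.mem_image, Finset.mem_offDiag, Prod.exists,
      Function.uncurry_apply_pair, Sym2.eq_iff]
    aesop

theorem pairsIn_inter (A B : Finset V) : pairsIn A ∩ pairsIn B = pairsIn (A ∩ B) := by
  ext e
  induction e with
  | _ a b => simp only [Finset.mem_inter, mk_mem_pairsIn]; tauto

theorem not_isDiag_of_mem_pairsIn {A : Finset V} {e : Sym2 V} (he : e ∈ pairsIn A) : ¬ e.IsDiag :=
  (Finset.mem_filter.1 he).2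

/-- The unordered pairs with one element in `A` and one in `B`. -/
def pairsBetween (A B : Finset V) : Finset (Sym2 V) := (A ×ˢ B).image fun x => s(x.1, x.2)

theorem mem_pairsBetween {A B : Finset V} {e : Sym2 V} :
    e ∈ pairsBetween A B ↔ ∃ a ∈ A, ∃ b ∈ B, s(a, b) = e := by
  simp [pairsBetween, and_assoc]

theorem not_isDiag_of_mem_pairsBetween {A B : Finset V} (hAB : Disjoint A B) {e : Sym2 V}
    (he : e ∈ pairsBetween A B) : ¬ e.IsDiag := by
  obtain ⟨a, ha, b, hb, rfl⟩ := mem_pairsBetween.1 he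
  exact Sym2.mk_isDiag_iff.not.2 (hAB.forall_ne_finset ha hb)

theorem card_pairsBetween {A B : Finset V} (hAB : Disjoint A B) :
    #(pairsBetween A B) = #A * #B := by
  rw [pairsBetween, Finset.card_image_of_injOn, Finset.card_product]
  rintro ⟨a, b⟩ hab ⟨a', b'⟩ hab' h
  simp only [Finset.coe_product, Set.mem_prod, Finset.mem_coe] at hab hab'
  rcases Sym2.eq_iff.1 h with ⟨rfl, rfl⟩ | ⟨rfl, rfl⟩
  · rfl
  · exact absurd rfl (hAB.forall_ne_finset hab.1 hab'.2)

theorem pairwiseDisjoint_pairsBetween_singleton [Fintype V] (A : Finset V) :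
    ((Aᶜ : Finset V) : Set V).PairwiseDisjoint fun v => pairsBetween A {v} := by
  intro v hv w hw hvw
  refine Finset.disjoint_left.2 fun e hev hew => hvw ?_
  simp only [mem_pairsBetween, Finset.mem_singleton] at hev hew
  obtain ⟨a, ha, _, rfl, hav⟩ := hev
  obtain ⟨b, -, _, rfl, hbw⟩ := hew
  rcases Sym2.eq_iff.1 (hav.trans hbw.symm) with h | h
  · exact h.2
  · exact absurd (h.1 ▸ ha) (Finset.mem_compl.1 hw)

end Pairs

section Properties

variable {V : Type*}

/-- Every set of `t` vertices spans more than `t` edges. -/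
def IsLocallyDense (G : SimpleGraph V) (t : ℕ) : Prop :=
  ∀ A : Finset V, #A = t → t < (G.edgeSet ∩ A.sym2).ncard

/-- Any two disjoint sets of `t` vertices are joined by an edge. -/
def IsBiholeFree (G : SimpleGraph V) (t : ℕ) : Prop :=
  ∀ A B : Finset V, #A = t → #B = t → Disjoint A B → ∃ a ∈ A, ∃ b ∈ B, G.Adj a b

/-- Any `m` vertices have at least `s` common neighbours. -/
def HasCommonNeighbors (G : SimpleGraph V) (m s : ℕ) : Prop :=
  ∀ A : Finset V, #A = m → s ≤ {v | ∀ a ∈ A, G.Adj a v}.ncard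

/-- Every set of `u` vertices contains an independent set of size `k`. -/
def HasLocalIndepSets (G : SimpleGraph V) (u k : ℕ) : Prop :=
  ∀ A : Finset V, #A = u → ∃ I ⊆ A, G.IsNIndepSet k I

end Properties

section UnionBound

theorem measureReal_setOf_exists_mem_le {Ω α : Type*} [MeasurableSpace Ω] {μ : Measure Ω}
    {s : Finset α} {E : α → Ω → Prop} {c : ℝ} (h : ∀ a ∈ s, μ.real {ω | E a ω} ≤ c) :
    μ.real {ω | ∃ a ∈ s, E a ω} ≤ #s * c := by
  have hset : {ω | ∃ a ∈ s, E a ω} = ⋃ a ∈ s, {ω | E a ω} := by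
    ext
    simp
  rw [hset, ← nsmul_eq_mul]
  exact (measureReal_biUnion_finset_le _ _).trans (Finset.sum_le_card_nsmul _ _ _ h)

variable {n : ℕ} {p : ℝ} (hp0 : 0 ≤ p) (hp1 : p ≤ 1)

instance isProbabilityMeasure_erMeasure : IsProbabilityMeasure (erMeasure n p) := by
  unfold erMeasure
  infer_instance

include hp0 hp1

theorem erMeasure_real_forall_notMem_edgeSet {S : Finset (Sym2 (Fin n))}
    (hS : ∀ e ∈ S, ¬ e.IsDiag) :
    (erMeasure n p).real {ω | ∀ e ∈ S, e ∉ (graphOf ω).edgeSet} = (1 - p) ^ #S := by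
  obtain ⟨μ, hμ, -, hfalse, her⟩ := exists_erMeasure_eq_pi hp0 hp1
  have h := measureReal_pi_forall_mem_eq μ (S.subtype fun e => ¬ e.IsDiag) false
  rw [Finset.card_subtype, Finset.filter_true_of_mem hS, hfalse, ← her] at h
  rw [← h]
  congr with ω
  simp only [mem_edgeSet_graphOf, not_exists, Bool.not_eq_true, Finset.mem_subtype, Subtype.forall]
  exact forall_congr' fun e => forall_comm

theorem erMeasure_real_not_isBiholeFree_le (t : ℕ) :
    (erMeasure n p).real {ω | ¬ IsBiholeFree (graphOf ω) t} ≤ n ^ (2 * t) * (1 - p) ^ t ^ 2 := by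
  have : 0 ≤ 1 - p := sub_nonneg.2 hp1
  let I : Finset (Finset (Fin n) × Finset (Fin n)) :=
    {x ∈ Finset.univ.powersetCard t ×ˢ Finset.univ.powersetCard t | Disjoint x.1 x.2}
  have hI : (#I : ℝ) ≤ n ^ (2 * t) := by
    have h : #I ≤ (n.choose t) * (n.choose t) := by
      simpa using Finset.card_filter_le (Finset.univ.powersetCard t ×ˢ Finset.univ.powersetCard t)
        fun x : Finset (Fin n) × Finset (Fin n) => Disjoint x.1 x.2
    rw [two_mul, pow_add]
    exact_mod_cast h.trans (Nat.mul_le_mul (Nat.choose_le_pow _ _) (Nat.choose_le_pow _ _))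
  calc (erMeasure n p).real {ω | ¬ IsBiholeFree (graphOf ω) t}
      ≤ (erMeasure n p).real
          {ω | ∃ x ∈ I, ∀ e ∈ pairsBetween x.1 x.2, e ∉ (graphOf ω).edgeSet} := by
        refine measureReal_mono fun ω hω => ?_
        simp only [IsBiholeFree, Set.mem_ofPred, not_forall, not_exists, not_and] at hω
        obtain ⟨A, B, hA, hB, hAB, h⟩ := hω
        refine ⟨(A, B), by simp [I, hA, hB, hAB], fun e he => ?_⟩
        obtain ⟨a, ha, b, hb, rfl⟩ := mem_pairsBetween.1 he
        exact h a ha b hb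
    _ ≤ #I * (1 - p) ^ t ^ 2 := measureReal_setOf_exists_mem_le fun x hx => by
        simp only [I, Finset.mem_filter, Finset.mem_product, Finset.mem_powersetCard_univ] at hx
        obtain ⟨⟨hA, hB⟩, hAB⟩ := hx
        rw [erMeasure_real_forall_notMem_edgeSet hp0 hp1 fun e =>
          not_isDiag_of_mem_pairsBetween hAB, card_pairsBetween hAB, hA, hB, sq]
    _ ≤ n ^ (2 * t) * (1 - p) ^ t ^ 2 := by gcongr

theorem erMeasure_real_not_isLocallyDense_le {t : ℕ} (ht : 3 ≤ t) :
    (erMeasure n p).real {ω | ¬ IsLocallyDense (graphOf ω) t} ≤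
      n ^ t * (t.choose 2) ^ t * (1 - p) ^ (t.choose 2 - t) := by
  have : 0 ≤ 1 - p := sub_nonneg.2 hp1
  have htt : t ≤ t.choose 2 := by
    rw [Nat.choose_two_right, Nat.le_div_iff_mul_le two_pos]
    exact Nat.mul_le_mul_left t (by omega)
  let I : Finset (Finset (Fin n) × Finset (Sym2 (Fin n))) :=
    (Finset.univ.powersetCard t).biUnion fun A =>
      (pairsIn A).powersetCard t |>.image fun S => (A, S)
  have hI : (#I : ℝ) ≤ n ^ t * (t.choose 2) ^ t := by
    have h : #I ≤ n.choose t * (t.choose 2).choose t := by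
      refine (Finset.card_biUnion_le_card_mul _ _ ((t.choose 2).choose t) fun A hA => ?_).trans
        (by simp)
      rw [Finset.mem_powersetCard_univ] at hA
      exact Finset.card_image_le.trans (by simp [card_pairsIn, hA])
    exact_mod_cast h.trans (Nat.mul_le_mul (Nat.choose_le_pow _ _) (Nat.choose_le_pow _ _))
  calc (erMeasure n p).real {ω | ¬ IsLocallyDense (graphOf ω) t}
      ≤ (erMeasure n p).real
          {ω | ∃ x ∈ I, ∀ e ∈ pairsIn x.1 \ x.2, e ∉ (graphOf ω).edgeSet} := by
        refine measureReal_mono fun ω hω => ?_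
        simp only [IsLocallyDense, Set.mem_ofPred, not_forall, not_lt] at hω
        obtain ⟨A, hA, h⟩ := hω
        classical
        obtain ⟨S, hS, hSA, hSt⟩ := Finset.exists_subsuperset_card_eq
          (Finset.filter_subset (· ∈ (graphOf ω).edgeSet) (pairsIn A)) (n := t) (by
            rw [← Set.ncard_coe_finset]
            refine (Set.ncard_le_ncard (fun e he => ?_) (Set.toFinite _)).trans h
            simp only [pairsIn, Finset.coe_filter, Finset.mem_filter] at he
            exact ⟨he.2, he.1.1⟩) (by rwa [card_pairsIn, hA])
        refine ⟨(A, S), by simp [I, hA, hSA, hSt], fun e he h => ?_⟩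
        rw [Finset.mem_sdiff] at he
        exact he.2 (hS (Finset.mem_filter.2 ⟨he.1, h⟩))
    _ ≤ #I * (1 - p) ^ (t.choose 2 - t) := measureReal_setOf_exists_mem_le fun x hx => by
        simp only [I, Finset.mem_biUnion, Finset.mem_image, Finset.mem_powersetCard] at hx
        obtain ⟨A, ⟨-, hA⟩, S, ⟨hSA, hSt⟩, rfl⟩ := hx
        rw [erMeasure_real_forall_notMem_edgeSet hp0 hp1 fun e he =>
          not_isDiag_of_mem_pairsIn (Finset.mem_sdiff.1 he).1, Finset.card_sdiff_of_subset hSA,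
          card_pairsIn, hA, hSt]
    _ ≤ n ^ t * (t.choose 2) ^ t * (1 - p) ^ (t.choose 2 - t) := by gcongr

theorem erMeasure_real_ncard_common_neighbors_lt_le (A : Finset (Fin n)) {s : ℕ} {x : ℝ}
    (hx : 0 ≤ x) (hs : s ≤ (n - #A) * p ^ #A - x) :
    (erMeasure n p).real {ω | {v | ∀ a ∈ A, (graphOf ω).Adj a v}.ncard < s} ≤
      exp (-2 * x ^ 2 / (#A * (n - #A))) := by
  obtain ⟨μ, hμ, htrue, -, her⟩ := exists_erMeasure_eq_pi hp0 hp1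
  have hstar {v : Fin n} (hv : v ∈ Aᶜ) : Disjoint A {v} := by simpa using hv
  let F (v : Fin n) : Finset (EdgeType n) := (pairsBetween A {v}).subtype fun e => ¬ e.IsDiag
  have hcard {v : Fin n} (hv : v ∈ Aᶜ) : #(F v) = #A := by
    rw [Finset.card_subtype, Finset.filter_true_of_mem fun e =>
      not_isDiag_of_mem_pairsBetween (hstar hv), card_pairsBetween (hstar hv),
      Finset.card_singleton, mul_one]
  have hF : ((Aᶜ : Finset (Fin n)) : Set (Fin n)).PairwiseDisjoint F := fun v hv w hw hvw =>
    Finset.disjoint_left.2 fun e hev hew => Finset.disjoint_left.1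
      (pairwiseDisjoint_pairsBetween_singleton A hv hw hvw) (Finset.mem_subtype.1 hev)
      (Finset.mem_subtype.1 hew)
  have hAn : ((#(Aᶜ : Finset (Fin n)) : ℕ) : ℝ) = n - #A := by
    rw [Finset.card_compl, Fintype.card_fin, Nat.cast_sub (by simpa using A.card_le_univ)]
  have h := measureReal_card_filter_forall_mem_eq_le μ hF true hx
  have hmean : ∑ v ∈ Aᶜ, μ.real {true} ^ #(F v) = (n - #A) * p ^ #A := by
    rw [Finset.sum_congr rfl fun v hv => congrArg _ (hcard hv), Finset.sum_const, nsmul_eq_mul,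
      hAn, htrue]
  have hsize : ∑ v ∈ Aᶜ, (#(F v) : ℝ) = #A * (n - #A) := by
    rw [Finset.sum_congr rfl fun v hv => congrArg _ (hcard hv), Finset.sum_const, nsmul_eq_mul,
      hAn, mul_comm]
  rw [hmean, hsize, ← her] at h
  refine (measureReal_mono fun ω hω => ?_).trans h
  refine le_trans ?_ ((Nat.cast_le.2 (le_of_lt hω)).trans hs)
  rw [Nat.cast_le, ← Set.ncard_coe_finset]
  refine Set.ncard_le_ncard (fun v hv a ha => ?_) (Set.toFinite _)
  simp only [Finset.coe_filter, F] at hv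
  have hav : ¬ s(a, v).IsDiag :=
    not_isDiag_of_mem_pairsBetween (hstar hv.1) (mem_pairsBetween.2 ⟨a, ha, v, by simp⟩)
  exact mem_edgeSet_graphOf.2 ⟨hav, hv.2 _ <| Finset.mem_subtype.2 <|
    mem_pairsBetween.2 ⟨a, ha, v, by simp⟩⟩

theorem erMeasure_real_not_hasCommonNeighbors_le {m s : ℕ} {x : ℝ} (hx : 0 ≤ x)
    (hs : s ≤ (n - m) * p ^ m - x) :
    (erMeasure n p).real {ω | ¬ HasCommonNeighbors (graphOf ω) m s} ≤
      n ^ m * exp (-2 * x ^ 2 / (m * (n - m))) := by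
  calc (erMeasure n p).real {ω | ¬ HasCommonNeighbors (graphOf ω) m s}
      ≤ (erMeasure n p).real {ω | ∃ A ∈ Finset.univ.powersetCard m,
          {v | ∀ a ∈ A, (graphOf ω).Adj a v}.ncard < s} := by
        refine measureReal_mono fun ω hω => ?_
        simpa [HasCommonNeighbors] using hω
    _ ≤ #(Finset.univ.powersetCard m : Finset (Finset (Fin n))) *
          exp (-2 * x ^ 2 / (m * (n - m))) :=
        measureReal_setOf_exists_mem_le fun A hA => by
          rw [Finset.mem_powersetCard_univ] at hA
          subst hA
          exact erMeasure_real_ncard_common_neighbors_lt_le hp0 hp1 A hx hs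
    _ ≤ n ^ m * exp (-2 * x ^ 2 / (m * (n - m))) := by
        gcongr
        rw [Finset.card_powersetCard, Finset.card_univ, Fintype.card_fin]
        exact_mod_cast Nat.choose_le_pow n m

end UnionBound

section OverlapCount

theorem pow_mul_descFactorial_le {u k : ℕ} (hku : k ≤ u) (l : ℕ) :
    u ^ l * k.descFactorial l ≤ k ^ l * u.descFactorial l := by
  induction l with
  | zero => simp
  | succ l ih =>
    have hstep : u * (k - l) ≤ k * (u - l) := by
      rw [Nat.mul_sub, Nat.mul_sub, mul_comm k u]
      exact Nat.sub_le_sub_left (Nat.mul_le_mul_right l hku) _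
    rw [Nat.descFactorial_succ, Nat.descFactorial_succ, pow_succ, pow_succ]
    calc u ^ l * u * ((k - l) * k.descFactorial l)
        = u * (k - l) * (u ^ l * k.descFactorial l) := by ring
      _ ≤ k * (u - l) * (k ^ l * u.descFactorial l) := Nat.mul_le_mul hstep ih
      _ = k ^ l * k * ((u - l) * u.descFactorial l) := by ring

theorem pow_mul_choose_sub_le {u k l : ℕ} (hku : k ≤ u) (hlk : l ≤ k) :
    u ^ l * (u - l).choose (k - l) ≤ k ^ l * u.choose k := by
  have hpos : 0 < u.choose l := Nat.choose_pos (hlk.trans hku)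
  have hfact : u ^ l * k.choose l ≤ k ^ l * u.choose l := by
    have h := pow_mul_descFactorial_le hku l
    rw [Nat.descFactorial_eq_factorial_mul_choose, Nat.descFactorial_eq_factorial_mul_choose,
      mul_left_comm, mul_left_comm (k ^ l)] at h
    exact Nat.le_of_mul_le_mul_left h l.factorial_pos
  refine Nat.le_of_mul_le_mul_left ?_ hpos
  calc u.choose l * (u ^ l * (u - l).choose (k - l))
      = u ^ l * (u.choose k * k.choose l) := by rw [Nat.choose_mul hlk]; ring
    _ ≤ u.choose k * (k ^ l * u.choose l) := by
      rw [mul_left_comm]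
      exact Nat.mul_le_mul_left _ hfact
    _ = u.choose l * (k ^ l * u.choose k) := by ring

variable {α : Type*} [DecidableEq α]

theorem card_filter_card_inter_eq_le {A U : Finset α} (hAU : A ⊆ U) {l : ℕ} (hl : l ≤ #A) :
    (#{B ∈ U.powersetCard #A | #(A ∩ B) = l} : ℝ) ≤
      (#U).choose #A * ((#A : ℝ) ^ 2 / #U) ^ l := by
  obtain rfl | hA := A.eq_empty_or_nonempty
  · obtain rfl : l = 0 := by simpa using hl
    simp
  have hU : (0 : ℝ) < #U := mod_cast (hA.mono hAU).card_pos
  have hcover : {B ∈ U.powersetCard #A | #(A ∩ B) = l} ⊆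
      (A.powersetCard l).biUnion fun L => {B ∈ U.powersetCard #A | L ⊆ B} := by
    intro B hB
    rw [Finset.mem_filter] at hB
    exact Finset.mem_biUnion.2 ⟨A ∩ B, Finset.mem_powersetCard.2 ⟨Finset.inter_subset_left, hB.2⟩,
      Finset.mem_filter.2 ⟨hB.1, Finset.inter_subset_right⟩⟩
  have hcard : #{B ∈ U.powersetCard #A | #(A ∩ B) = l} ≤
      #A ^ l * (#U - l).choose (#A - l) := by
    refine (Finset.card_le_card hcover).trans <| (Finset.card_biUnion_le_card_mul _ _ _
      fun L hL => ?_).trans <| Nat.mul_le_mul_right _ <| (Finset.card_powersetCard _ _).trans_le <|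
        Nat.choose_le_pow _ _
    obtain ⟨hLA, rfl⟩ := Finset.mem_powersetCard.1 hL
    exact (Finset.card_filter_powersetCard_subset _ _ _ (hLA.trans hAU) hl).le
  rw [div_pow, mul_div_assoc', le_div_iff₀ (by positivity)]
  calc (#{B ∈ U.powersetCard #A | #(A ∩ B) = l} : ℝ) * #U ^ l
      ≤ #A ^ l * (#U ^ l * (#U - l).choose (#A - l)) := by
        rw [mul_left_comm, mul_comm]
        gcongr
        exact_mod_cast hcard
    _ ≤ #A ^ l * (#A ^ l * (#U).choose #A) := by
        refine mul_le_mul_of_nonneg_left ?_ (by positivity)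
        exact_mod_cast pow_mul_choose_sub_le (Finset.card_le_card hAU) hl
    _ = (#U).choose #A * (#A ^ 2) ^ l := by ring

theorem sum_filter_card_inter_le {A U : Finset α} (hAU : A ⊆ U) (j : ℕ) {f : ℕ → ℝ}
    (hf : ∀ l, 0 ≤ f l) :
    ∑ B ∈ U.powersetCard #A with j ≤ #(A ∩ B), f #(A ∩ B) ≤
      (#U).choose #A * ∑ l ∈ Finset.Icc j #A, ((#A : ℝ) ^ 2 / #U) ^ l * f l := by
  rw [← Finset.sum_fiberwise_of_maps_to (g := fun B => #(A ∩ B)) (t := Finset.Icc j #A)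
    fun B hB => Finset.mem_Icc.2 ⟨(Finset.mem_filter.1 hB).2,
      Finset.card_le_card Finset.inter_subset_left⟩, Finset.mul_sum]
  refine Finset.sum_le_sum fun l hl => ?_
  rw [Finset.sum_congr rfl fun B hB => congrArg f (Finset.mem_filter.1 hB).2, Finset.sum_const,
    nsmul_eq_mul, ← mul_assoc]
  refine mul_le_mul_of_nonneg_right ?_ (hf l)
  refine le_trans ?_ (card_filter_card_inter_eq_le hAU (Finset.mem_Icc.1 hl).2)
  exact_mod_cast Finset.card_le_card (Finset.filter_subset_filter _ (Finset.filter_subset _ _))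

end OverlapCount

section IndependentSets

/-- The bound on the ratio `Δ / μ ^ 2` of Janson's inequality for the independent `k`-subsets of a
`u`-set, where `q` is the non-edge probability and `l` is the overlap of two `k`-subsets. -/
noncomputable def overlapSum (q : ℝ) (u k : ℕ) : ℝ :=
  ∑ l ∈ Finset.Icc 2 k, ((k : ℝ) ^ 2 / u) ^ l * (q⁻¹) ^ l.choose 2

theorem sum_not_disjoint_pairsIn_le {V : Type*} [DecidableEq V] {q : ℝ} (hq : 0 < q)
    (U : Finset V) (k : ℕ) :
    ∑ x ∈ U.powersetCard k ×ˢ U.powersetCard k with ¬ Disjoint (pairsIn x.1) (pairsIn x.2),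
      q ^ #(pairsIn x.1 ∪ pairsIn x.2) ≤
        ((#U).choose k * q ^ k.choose 2) ^ 2 * overlapSum q #U k := by
  have hunion {A B : Finset V} (hA : #A = k) (hB : #B = k) :
      q ^ #(pairsIn A ∪ pairsIn B) = (q ^ k.choose 2) ^ 2 * q⁻¹ ^ (#(A ∩ B)).choose 2 := by
    have h := Finset.card_union_add_card_inter (pairsIn A) (pairsIn B)
    rw [pairsIn_inter, card_pairsIn, card_pairsIn, card_pairsIn, hA, hB] at h
    rw [inv_pow, eq_mul_inv_iff_mul_eq₀ (by positivity), ← pow_add, h, pow_add, sq]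
  have hmeet {A B : Finset V} : ¬ Disjoint (pairsIn A) (pairsIn B) ↔ 2 ≤ #(A ∩ B) := by
    rw [Finset.disjoint_iff_inter_eq_empty, pairsIn_inter, ← Finset.card_eq_zero, card_pairsIn,
      Nat.choose_eq_zero_iff, not_lt]
  have hinner (A : Finset V) (hA : A ∈ U.powersetCard k) :
      ∑ B ∈ U.powersetCard k with 2 ≤ #(A ∩ B), q⁻¹ ^ (#(A ∩ B)).choose 2 ≤
        (#U).choose k * overlapSum q #U k := by
    obtain ⟨hAU, rfl⟩ := Finset.mem_powersetCard.1 hA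
    exact sum_filter_card_inter_le hAU 2 (f := fun l => q⁻¹ ^ l.choose 2) fun l => by positivity
  simp only [hmeet]
  rw [Finset.sum_filter, Finset.sum_product]
  simp only [← Finset.sum_filter]
  calc ∑ A ∈ U.powersetCard k, ∑ B ∈ U.powersetCard k with 2 ≤ #(A ∩ B),
        q ^ #(pairsIn A ∪ pairsIn B)
      = ∑ A ∈ U.powersetCard k, (q ^ k.choose 2) ^ 2 *
          ∑ B ∈ U.powersetCard k with 2 ≤ #(A ∩ B), q⁻¹ ^ (#(A ∩ B)).choose 2 := by
        refine Finset.sum_congr rfl fun A hA => ?_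
        rw [Finset.mul_sum]
        refine Finset.sum_congr rfl fun B hB => hunion (Finset.mem_powersetCard.1 hA).2 ?_
        exact (Finset.mem_powersetCard.1 (Finset.mem_filter.1 hB).1).2
    _ ≤ ∑ A ∈ U.powersetCard k, (q ^ k.choose 2) ^ 2 *
          ((#U).choose k * overlapSum q #U k) := by
        gcongr with A hA
        exact hinner A hA
    _ = ((#U).choose k * q ^ k.choose 2) ^ 2 * overlapSum q #U k := by
        rw [Finset.sum_const, Finset.card_powersetCard, nsmul_eq_mul]
        ring

theorem sum_not_disjoint_pairsIn_pos {V : Type*} [DecidableEq V] {q : ℝ} (hq : 0 < q)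
    {U : Finset V} {k : ℕ} (hk : 2 ≤ k) (hkU : k ≤ #U) :
    0 < ∑ x ∈ U.powersetCard k ×ˢ U.powersetCard k with ¬ Disjoint (pairsIn x.1) (pairsIn x.2),
      q ^ #(pairsIn x.1 ∪ pairsIn x.2) := by
  refine Finset.sum_pos (fun _ _ => by positivity) ?_
  obtain ⟨B, hBU, hBk⟩ := Finset.exists_subset_card_eq hkU
  have hB : B ∈ U.powersetCard k := Finset.mem_powersetCard.2 ⟨hBU, hBk⟩
  have hne : (pairsIn B).Nonempty := by
    rw [← Finset.card_pos, card_pairsIn, hBk]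
    exact Nat.choose_pos hk
  exact ⟨(B, B), Finset.mem_filter.2 ⟨Finset.mk_mem_product hB hB,
    fun hd => hne.ne_empty (disjoint_self.1 hd)⟩⟩

theorem exists_mem_pairsIn_of_not_isIndepSet {V : Type*} [DecidableEq V] {G : SimpleGraph V}
    {B : Finset V} (hB : ¬ G.IsIndepSet B) : ∃ e ∈ pairsIn B, e ∈ G.edgeSet := by
  rw [SimpleGraph.isIndepSet_iff, Set.Pairwise] at hB
  push Not at hB
  obtain ⟨a, ha, b, hb, hab, hadj⟩ := hB
  exact ⟨s(a, b), mk_mem_pairsIn.2 ⟨⟨ha, hb⟩, hab⟩, hadj⟩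

variable {n : ℕ} {p : ℝ} (hp0 : 0 ≤ p)

include hp0

theorem erMeasure_real_forall_exists_mem_edgeSet_le (hp1 : p ≤ 1) {κ : Type*} {S : Finset κ}
    {P : κ → Finset (Sym2 (Fin n))} (hP : ∀ a ∈ S, (P a).Nonempty)
    (hdiag : ∀ a, ∀ e ∈ P a, ¬ e.IsDiag) :
    (erMeasure n p).real {ω | ∀ a ∈ S, ∃ e ∈ P a, e ∈ (graphOf ω).edgeSet} ≤
      exp (-2 * ((∑ a ∈ S, (1 - p) ^ #(P a)) ^ 2 /
        ∑ x ∈ S ×ˢ S with ¬ Disjoint (P x.1) (P x.2), (1 - p) ^ #(P x.1 ∪ P x.2)) ^ 2 /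
          n.choose 2) := by
  obtain ⟨μ, hμ, -, hfalse, her⟩ := exists_erMeasure_eq_pi hp0 hp1
  let E (a : κ) : Finset (EdgeType n) := (P a).subtype fun e => ¬ e.IsDiag
  have hmap (a : κ) : (E a).map (Function.Embedding.subtype _) = P a := by
    rw [Finset.subtype_map, Finset.filter_true_of_mem (hdiag a)]
  have hcard (a : κ) : #(E a) = #(P a) := by rw [← hmap, Finset.card_map]
  have hunion (a b : κ) : #(E a ∪ E b) = #(P a ∪ P b) := by
    rw [← hmap, ← hmap, ← Finset.map_union, Finset.card_map]
  have hdisj (a b : κ) : Disjoint (E a) (E b) ↔ Disjoint (P a) (P b) := by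
    rw [← hmap, ← hmap, Finset.disjoint_map]
  have h := measureReal_pi_forall_exists_true_le μ (P := fun a : S => E a) fun a => by
    rw [← Finset.card_pos, hcard, Finset.card_pos]
    exact hP a a.2
  rw [Sym2.card_subtype_not_diag, Fintype.card_fin] at h
  simp only [hcard, hunion, hdisj, hfalse, ← her, Finset.sum_filter, Fintype.sum_prod_type] at h
  rw [Finset.sum_coe_sort S fun a => (1 - p) ^ #(P a)] at h
  have hpairs (g : κ → κ → ℝ) : ∑ a : S, ∑ b : S, g a b = ∑ x ∈ S ×ˢ S, g x.1 x.2 := by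
    rw [Finset.sum_product, ← Finset.sum_coe_sort S]
    exact Finset.sum_congr rfl fun a _ => Finset.sum_coe_sort S (g a)
  rw [hpairs fun a b => if ¬ Disjoint (P a) (P b) then (1 - p) ^ #(P a ∪ P b) else 0,
    ← Finset.sum_filter] at h
  refine (measureReal_mono fun ω hω a => ?_).trans h
  obtain ⟨e, he, hω⟩ := hω a a.2
  exact ⟨⟨e, hdiag a e he⟩, Finset.mem_subtype.2 he, (mem_edgeSet_graphOf.1 hω).2⟩

theorem erMeasure_real_forall_not_isNIndepSet_le (hp1 : p < 1) {A : Finset (Fin n)} {k : ℕ}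
    (hk : 2 ≤ k) (hkA : k ≤ #A) :
    (erMeasure n p).real {ω | ∀ I ⊆ A, ¬ (graphOf ω).IsNIndepSet k I} ≤
      exp (-2 * (overlapSum (1 - p) #A k)⁻¹ ^ 2 / n.choose 2) := by
  have hq : 0 < 1 - p := sub_pos.2 hp1
  have hcard {B : Finset (Fin n)} (hB : B ∈ A.powersetCard k) : #(pairsIn B) = k.choose 2 := by
    rw [card_pairsIn, (Finset.mem_powersetCard.1 hB).2]
  have hne : ∀ B ∈ A.powersetCard k, (pairsIn B).Nonempty := fun B hB =>
    Finset.card_pos.1 (by rw [hcard hB]; exact Nat.choose_pos hk)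
  have h := erMeasure_real_forall_exists_mem_edgeSet_le hp0 hp1.le hne
    fun _ _ => not_isDiag_of_mem_pairsIn
  rw [Finset.sum_congr rfl fun B hB => congrArg _ (hcard hB), Finset.sum_const,
    Finset.card_powersetCard, nsmul_eq_mul] at h
  have hΔ := sum_not_disjoint_pairsIn_le hq A k
  have hΔ0 := sum_not_disjoint_pairsIn_pos hq hk hkA
  generalize ∑ x ∈ A.powersetCard k ×ˢ A.powersetCard k with
      ¬ Disjoint (pairsIn x.1) (pairsIn x.2), (1 - p) ^ #(pairsIn x.1 ∪ pairsIn x.2) = Δ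
    at h hΔ hΔ0
  have hchoose : (0 : ℝ) < (#A).choose k := mod_cast Nat.choose_pos hkA
  have hφ : 0 < overlapSum (1 - p) #A k := pos_of_mul_pos_right (hΔ0.trans_le hΔ) (by positivity)
  have hratio : (overlapSum (1 - p) #A k)⁻¹ ≤ ((#A).choose k * (1 - p) ^ k.choose 2) ^ 2 / Δ := by
    rwa [inv_eq_one_div, div_le_div_iff₀ hφ hΔ0, one_mul]
  refine (measureReal_mono fun ω hω B hB => ?_).trans (h.trans ?_)
  · obtain ⟨hBA, hBk⟩ := Finset.mem_powersetCard.1 hB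
    exact exists_mem_pairsIn_of_not_isIndepSet fun hi => hω B hBA ⟨hi, hBk⟩
  · simp only [neg_mul, neg_div]
    gcongr

theorem erMeasure_real_not_hasLocalIndepSets_le (hp1 : p < 1) {u k : ℕ} (hk : 2 ≤ k)
    (hku : k ≤ u) :
    (erMeasure n p).real {ω | ¬ HasLocalIndepSets (graphOf ω) u k} ≤
      2 ^ n * exp (-2 * (overlapSum (1 - p) u k)⁻¹ ^ 2 / n.choose 2) := by
  calc (erMeasure n p).real {ω | ¬ HasLocalIndepSets (graphOf ω) u k}
      ≤ (erMeasure n p).real {ω | ∃ A ∈ Finset.univ.powersetCard u,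
          ∀ I ⊆ A, ¬ (graphOf ω).IsNIndepSet k I} := by
        refine measureReal_mono fun ω hω => ?_
        simpa [HasLocalIndepSets] using hω
    _ ≤ #(Finset.univ.powersetCard u : Finset (Finset (Fin n))) *
          exp (-2 * (overlapSum (1 - p) u k)⁻¹ ^ 2 / n.choose 2) :=
        measureReal_setOf_exists_mem_le fun A hA => by
          rw [Finset.mem_powersetCard_univ] at hA
          subst hA
          exact erMeasure_real_forall_not_isNIndepSet_le hp0 hp1 hk hku
    _ ≤ 2 ^ n * exp (-2 * (overlapSum (1 - p) u k)⁻¹ ^ 2 / n.choose 2) := by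
        gcongr
        rw [Finset.card_powersetCard, Finset.card_univ, Fintype.card_fin]
        exact_mod_cast Nat.choose_le_two_pow n u

end IndependentSets

section HoldsWhp

/-- The graph property `P` holds with high probability in `G(n, p)`, for fixed `p`. -/
def HoldsWhp (p : ℝ) (P : ∀ n, SimpleGraph (Fin n) → Prop) : Prop :=
  Tendsto (fun n => erMeasure n p {ω | P n (graphOf ω)}) atTop (nhds 1)

variable {p : ℝ} {P Q : ∀ n, SimpleGraph (Fin n) → Prop}

theorem holdsWhp_iff : HoldsWhp p P ↔
    Tendsto (fun n => (erMeasure n p).real {ω | ¬ P n (graphOf ω)}) atTop (nhds 0) := by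
  have hcompl (n : ℕ) : (erMeasure n p).real {ω | ¬ P n (graphOf ω)} =
      1 - (erMeasure n p {ω | P n (graphOf ω)}).toReal :=
    probReal_compl_eq_one_sub (μ := erMeasure n p) .of_discrete
  rw [HoldsWhp, ← ENNReal.tendsto_toReal_iff (fun _ => measure_ne_top _ _) ENNReal.one_ne_top]
  simp only [hcompl, ENNReal.toReal_one]
  refine ⟨fun h => by simpa using h.const_sub 1, fun h => by simpa using h.const_sub 1⟩

theorem holdsWhp_of_eventually_le {b : ℕ → ℝ} (hb : Tendsto b atTop (nhds 0))
    (h : ∀ᶠ n in atTop, (erMeasure n p).real {ω | ¬ P n (graphOf ω)} ≤ b n) : HoldsWhp p P :=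
  holdsWhp_iff.2 <| squeeze_zero' (.of_forall fun _ => measureReal_nonneg) h hb

theorem HoldsWhp.and (hP : HoldsWhp p P) (hQ : HoldsWhp p Q) :
    HoldsWhp p fun n G => P n G ∧ Q n G := by
  refine holdsWhp_of_eventually_le (by simpa using (holdsWhp_iff.1 hP).add (holdsWhp_iff.1 hQ))
    (.of_forall fun n => (measureReal_mono fun ω hω => ?_).trans (measureReal_union_le _ _))
  exact not_and_or.1 hω

theorem HoldsWhp.mono (hP : HoldsWhp p P) (h : ∀ᶠ n in atTop, ∀ G, P n G → Q n G) :
    HoldsWhp p Q :=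
  holdsWhp_of_eventually_le (holdsWhp_iff.1 hP) <| h.mono fun _ hn =>
    measureReal_mono fun _ => mt (hn _)

end HoldsWhp

section Typical

variable {p : ℝ} (hp0 : 0 < p) (hp1 : p < 1)

theorem tendsto_logb_natCast_atTop {b : ℝ} (hb : 1 < b) :
    Tendsto (fun n : ℕ => logb b n) atTop atTop :=
  (tendsto_logb_atTop hb).comp tendsto_natCast_atTop_atTop

theorem isBigO_log_of_le_mul_logb {b c : ℝ} {t : ℕ → ℕ}
    (ht : ∀ᶠ n : ℕ in atTop, (t n : ℝ) ≤ c * logb b n) :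
    (fun n => (t n : ℝ)) =O[atTop] fun n : ℕ => log n := by
  refine .of_bound ‖c / log b‖ (ht.mono fun n hn => ?_)
  rw [← norm_mul, div_mul_eq_mul_div, mul_div_assoc, RCLike.norm_natCast]
  exact hn.trans (le_abs_self _)

theorem isLittleO_pow_natCast_rpow {t : ℕ → ℕ}
    (ht : (fun n => (t n : ℝ)) =O[atTop] fun n : ℕ => log n) (M : ℕ) {δ : ℝ} (hδ : 0 < δ) :
    (fun n => (t n : ℝ) ^ M) =o[atTop] fun n : ℕ => (n : ℝ) ^ δ := by
  refine (ht.pow M).trans_isLittleO ?_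
  have h := (isLittleO_log_rpow_rpow_atTop (M : ℝ) hδ).comp_tendsto tendsto_natCast_atTop_atTop
  simp only [Function.comp_def, rpow_natCast] at h
  exact h

theorem two_mul_choose_two_sub (t : ℕ) : 2 * (t.choose 2 - t) = t * (t - 3) := by
  rw [Nat.mul_sub, mul_comm 2, Nat.choose_two_right,
    Nat.div_mul_cancel (Nat.even_mul_pred_self _).two_dvd, mul_comm 2, ← Nat.mul_sub]
  rfl

include hp0 hp1

theorem one_sub_pow_le_rpow_neg {c : ℝ} {t n : ℕ} (hn : 0 < n)
    (ht : c * logb (1 / (1 - p)) n ≤ t) : (1 - p) ^ t ≤ (n : ℝ) ^ (-c) := by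
  have hq : 0 < 1 - p := sub_pos.2 hp1
  have hb : 1 < 1 / (1 - p) := one_lt_one_div hq (sub_lt_self 1 hp0)
  calc (1 - p) ^ t = (1 - p) ^ (t : ℝ) := (rpow_natCast _ _).symm
    _ ≤ (1 - p) ^ (c * logb (1 / (1 - p)) n) :=
      rpow_le_rpow_of_exponent_ge hq (by linarith) ht
    _ = ((1 / (1 - p)) ^ logb (1 / (1 - p)) n) ^ (-c) := by
      rw [← rpow_mul (by positivity), one_div, inv_rpow hq.le, ← rpow_neg hq.le]
      ring_nf
    _ = (n : ℝ) ^ (-c) := by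
      rw [rpow_logb (by positivity) hb.ne' (Nat.cast_pos.2 hn)]

theorem holdsWhp_isBiholeFree {η : ℝ} (hη : 0 < η) {t : ℕ → ℕ}
    (ht : ∀ᶠ n : ℕ in atTop, (2 + η) * logb (1 / (1 - p)) n ≤ t n) :
    HoldsWhp p fun n G => IsBiholeFree G (t n) := by
  have hlim := (tendsto_rpow_neg_atTop hη).comp (tendsto_natCast_atTop_atTop (R := ℝ))
  refine holdsWhp_of_eventually_le hlim ?_
  filter_upwards [ht, eventually_ge_atTop 2] with n htn hn
  have hq : 0 < 1 - p := sub_pos.2 hp1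
  have hn1 : (1 : ℝ) < n := by exact_mod_cast hn
  have htpos : t n ≠ 0 := by
    have hb : 1 < 1 / (1 - p) := one_lt_one_div hq (sub_lt_self 1 hp0)
    have := (mul_pos (by linarith : 0 < 2 + η) (logb_pos hb hn1)).trans_le htn
    exact_mod_cast this.ne'
  refine (erMeasure_real_not_isBiholeFree_le hp0.le hp1.le (t n)).trans ?_
  have hbase : (n : ℝ) ^ 2 * (1 - p) ^ t n ≤ (n : ℝ) ^ (-η) := by
    calc (n : ℝ) ^ 2 * (1 - p) ^ t n ≤ (n : ℝ) ^ 2 * (n : ℝ) ^ (-(2 + η)) := by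
          gcongr
          exact one_sub_pow_le_rpow_neg hp0 hp1 (by omega) htn
      _ = (n : ℝ) ^ (-η) := by
          rw [← rpow_natCast, ← rpow_add (by linarith)]
          norm_num
  calc (n : ℝ) ^ (2 * t n) * (1 - p) ^ t n ^ 2
      = ((n : ℝ) ^ 2 * (1 - p) ^ t n) ^ t n := by rw [mul_pow, ← pow_mul, ← pow_mul, sq (t n)]
    _ ≤ ((n : ℝ) ^ (-η)) ^ t n := by gcongr
    _ ≤ (n : ℝ) ^ (-η) := pow_le_of_le_one (by positivity)
        (rpow_le_one_of_one_le_of_nonpos hn1.le (by linarith)) htpos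

theorem sq_mul_sq_mul_one_sub_pow_le {η : ℝ} {t n : ℕ} (hn : 0 < n) (ht3 : 3 ≤ t)
    (ht : (2 + η) * logb (1 / (1 - p)) n ≤ t) :
    (n : ℝ) ^ 2 * (t.choose 2) ^ 2 * (1 - p) ^ (t - 3) ≤
      ((t : ℝ) ^ 2 / (n : ℝ) ^ (η / 2) * ((1 - p) ^ 2)⁻¹) ^ 2 := by
  have hq : 0 < 1 - p := sub_pos.2 hp1
  have hchoose : ((t).choose 2 : ℝ) ≤ (t : ℝ) ^ 2 := mod_cast Nat.choose_le_pow _ _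
  have hpow : (1 - p) ^ (t - 3) ≤ (n : ℝ) ^ (-(2 + η)) * ((1 - p) ^ 4)⁻¹ := by
    rw [← div_eq_mul_inv, le_div_iff₀ (by positivity), ← pow_add]
    exact (pow_le_pow_of_le_one hq.le (by linarith) (by omega)).trans
      (one_sub_pow_le_rpow_neg hp0 hp1 hn ht)
  have hn' : (0 : ℝ) < n := Nat.cast_pos.2 hn
  calc (n : ℝ) ^ 2 * ((t).choose 2) ^ 2 * (1 - p) ^ (t - 3)
      ≤ (n : ℝ) ^ 2 * ((t : ℝ) ^ 2) ^ 2 * ((n : ℝ) ^ (-(2 + η)) * ((1 - p) ^ 4)⁻¹) := by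
        gcongr
    _ = ((t : ℝ) ^ 2 / (n : ℝ) ^ (η / 2) * ((1 - p) ^ 2)⁻¹) ^ 2 := by
        rw [neg_add, rpow_add hn', rpow_neg hn'.le, rpow_neg hn'.le, rpow_two, mul_pow, div_pow,
          ← rpow_natCast ((n : ℝ) ^ (η / 2)), ← rpow_mul hn'.le]
        norm_num
        field_simp

theorem holdsWhp_isLocallyDense {η : ℝ} (hη : 0 < η) {t : ℕ → ℕ}
    (ht : ∀ᶠ n : ℕ in atTop, (2 + η) * logb (1 / (1 - p)) n ≤ t n)
    (htO : (fun n => (t n : ℝ)) =O[atTop] fun n : ℕ => log n) :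
    HoldsWhp p fun n G => IsLocallyDense G (t n) := by
  have hq : 0 < 1 - p := sub_pos.2 hp1
  have hb : 1 < 1 / (1 - p) := one_lt_one_div hq (sub_lt_self 1 hp0)
  have hlim : Tendsto (fun n => ((t n : ℝ) ^ 2 / (n : ℝ) ^ (η / 2)) * ((1 - p) ^ 2)⁻¹) atTop
      (nhds 0) := by
    simpa using ((isLittleO_pow_natCast_rpow htO 2 (half_pos hη)).tendsto_div_nhds_zero).mul_const
      ((1 - p) ^ 2)⁻¹
  have htop : Tendsto t atTop atTop := tendsto_natCast_atTop_iff.1 <|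
    tendsto_atTop_mono' _ ht <| (tendsto_logb_natCast_atTop hb).const_mul_atTop (by linarith)
  refine holdsWhp_of_eventually_le hlim ?_
  filter_upwards [ht, htop.eventually_ge_atTop 3, eventually_gt_atTop 0,
    hlim.eventually_le_const one_pos] with n htn ht3 hn hle
  refine (erMeasure_real_not_isLocallyDense_le hp0.le hp1.le ht3).trans ?_
  refine (abs_le_of_sq_le_sq' ?_ (by positivity)).2.trans
    (pow_le_of_le_one (n := t n) (by positivity) hle (by omega))
  calc ((n : ℝ) ^ t n * ((t n).choose 2) ^ t n * (1 - p) ^ ((t n).choose 2 - t n)) ^ 2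
      = ((n : ℝ) ^ 2 * ((t n).choose 2) ^ 2 * (1 - p) ^ (t n - 3)) ^ t n := by
        simp only [mul_pow, ← pow_mul, mul_comm _ 2, two_mul_choose_two_sub,
          mul_comm (t n - 3)]
    _ ≤ (((t n : ℝ) ^ 2 / (n : ℝ) ^ (η / 2) * ((1 - p) ^ 2)⁻¹) ^ 2) ^ t n := by
        gcongr
        exact sq_mul_sq_mul_one_sub_pow_le hp0 hp1 hn ht3 htn
    _ = _ := pow_right_comm _ _ _

theorem holdsWhp_hasCommonNeighbors {m : ℕ} (hm : m ≠ 0) {c : ℝ} (hc : c < p ^ m) {s : ℕ → ℕ}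
    (hs : ∀ᶠ n : ℕ in atTop, (s n : ℝ) ≤ c * n) :
    HoldsWhp p fun n G => HasCommonNeighbors G m (s n) := by
  have hα : 0 < (p ^ m - c) / 2 := by linarith
  have hβ : 0 < 2 * ((p ^ m - c) / 2) ^ 2 / m := by positivity
  have hlim := ((isLittleO_pow_exp_pos_mul_atTop m hβ).tendsto_div_nhds_zero).comp
    (tendsto_natCast_atTop_atTop (R := ℝ))
  refine holdsWhp_of_eventually_le hlim ?_
  filter_upwards [hs, eventually_gt_atTop m, tendsto_natCast_atTop_atTop.eventually_ge_atTop
    (m * p ^ m / ((p ^ m - c) / 2))] with n hsn hmn hn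
  have hmn' : (0 : ℝ) < n - m := sub_pos.2 (by exact_mod_cast hmn)
  rw [div_le_iff₀ hα] at hn
  refine (erMeasure_real_not_hasCommonNeighbors_le hp0.le hp1.le
    (x := (p ^ m - c) / 2 * n) (by positivity) (by linarith)).trans ?_
  rw [Function.comp_apply, div_eq_mul_inv _ (exp _), ← Real.exp_neg]
  gcongr
  rw [neg_mul, neg_div, neg_le_neg_iff, mul_pow, le_div_iff₀ (by positivity)]
  calc 2 * ((p ^ m - c) / 2) ^ 2 / m * n * (m * (n - m))
      = 2 * ((p ^ m - c) / 2) ^ 2 * (n * (n - m)) := by field_simp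
    _ ≤ 2 * ((p ^ m - c) / 2) ^ 2 * (n * n) := by gcongr; linarith
    _ = 2 * (((p ^ m - c) / 2) ^ 2 * n ^ 2) := by ring

omit hp0 hp1 in
theorem overlapSum_pos {q : ℝ} (hq : 0 < q) {u k : ℕ} (hk : 2 ≤ k) (hku : k ≤ u) :
    0 < overlapSum q u k := by
  have hu : 0 < u := by omega
  exact Finset.sum_pos (fun l _ => by positivity) ⟨2, Finset.mem_Icc.2 ⟨le_rfl, hk⟩⟩

omit hp0 hp1 in
/-- The exponent is convex in `l`, so it suffices to bound it at `l = 2` and at `l = k`. -/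
theorem overlap_exponent_le {κ x δ η k l : ℝ} (hκ : 0 ≤ κ) (hκx : κ ≤ δ * x) (hx : 0 ≤ x)
    (hδη : 8 * δ ≤ η) (hkη : 8 ≤ η * k) (hkx : κ * k ≤ (2 - η) * x) (hl : 2 ≤ l) (hlk : l ≤ k) :
    l * (-(1 - 2 * δ) * x) + κ * (l * (l - 1) / 2) ≤ -(2 - 5 * δ) * x := by
  obtain rfl | hl := hl.eq_or_lt
  · linarith
  have hk : k * (-(1 - 2 * δ) * x) + κ * (k * (k - 1) / 2) ≤ -(2 - 5 * δ) * x := by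
    have h₁ : k * (κ * k) ≤ k * ((2 - η) * x) := by gcongr; linarith
    have h₂ : 8 * δ * (k * x) ≤ η * (k * x) := by gcongr; nlinarith
    have h₃ : 8 * x ≤ η * k * x := by gcongr
    nlinarith
  refine le_of_mul_le_mul_left ?_ (sub_pos.2 (hl.trans_le hlk))
  have hchord : 0 ≤ κ * ((l - 2) * (k - l) * (k - 2)) := by
    have := sub_nonneg.2 hlk
    have := sub_pos.2 hl
    have := sub_pos.2 (hl.trans_le hlk)
    positivity
  have h₂ : (k - l) * (2 * (-(1 - 2 * δ) * x) + κ) ≤ (k - l) * (-(2 - 5 * δ) * x) :=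
    mul_le_mul_of_nonneg_left (by linarith) (sub_nonneg.2 hlk)
  have hₖ := mul_le_mul_of_nonneg_left hk (sub_pos.2 hl).le
  linarith

omit hp0 hp1 in
theorem overlapSum_le {q x δ η : ℝ} {u k : ℕ} (hq0 : 0 < q) (hq1 : q ≤ 1) (hx : 0 ≤ x)
    (hqx : -log q ≤ δ * x) (hδη : 8 * δ ≤ η) (hkη : 8 ≤ η * k)
    (hkx : -log q * k ≤ (2 - η) * x) (hksq : (k : ℝ) ^ 2 ≤ exp (δ * x))
    (hu : exp ((1 - δ) * x) ≤ u) :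
    overlapSum q u k ≤ k * exp (-(2 - 5 * δ) * x) := by
  have hinv : q⁻¹ = exp (-log q) := by rw [Real.exp_neg, Real.exp_log hq0]
  have hbase : (k : ℝ) ^ 2 / u ≤ exp (-(1 - 2 * δ) * x) := by
    rw [div_le_iff₀ ((Real.exp_pos _).trans_le hu)]
    calc (k : ℝ) ^ 2 ≤ exp (δ * x) := hksq
      _ = exp (-(1 - 2 * δ) * x) * exp ((1 - δ) * x) := by rw [← Real.exp_add]; ring_nf
      _ ≤ exp (-(1 - 2 * δ) * x) * u := by gcongr
  calc overlapSum q u k ≤ ∑ l ∈ Finset.Icc 2 k, exp (-(2 - 5 * δ) * x) := by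
        refine Finset.sum_le_sum fun l hl => ?_
        obtain ⟨hl2, hlk⟩ := Finset.mem_Icc.1 hl
        calc ((k : ℝ) ^ 2 / u) ^ l * q⁻¹ ^ l.choose 2
            ≤ exp (-(1 - 2 * δ) * x) ^ l * q⁻¹ ^ l.choose 2 := by gcongr
          _ = exp (l * (-(1 - 2 * δ) * x) + -log q * (l * (l - 1) / 2)) := by
            rw [hinv, ← Real.exp_nat_mul, ← Real.exp_nat_mul, ← Real.exp_add,
              Nat.cast_choose_two, mul_comm (-log q)]
          _ ≤ exp (-(2 - 5 * δ) * x) := Real.exp_le_exp.2 <|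
            overlap_exponent_le (neg_nonneg.2 (Real.log_nonpos hq0.le hq1)) hqx hx hδη hkη hkx
              (mod_cast hl2) (mod_cast hlk)
    _ ≤ k * exp (-(2 - 5 * δ) * x) := by
        rw [Finset.sum_const, Nat.card_Icc, nsmul_eq_mul]
        gcongr
        omega

omit hp0 in
theorem two_pow_mul_exp_overlapSum_le {n u k : ℕ} (hn : 2 ≤ n) (hk : 2 ≤ k) (hku : k ≤ u)
    (hφ : overlapSum (1 - p) u k ≤ exp (-(3 / 2) * log n)) :
    2 ^ n * exp (-2 * (overlapSum (1 - p) u k)⁻¹ ^ 2 / n.choose 2) ≤ exp (-n) := by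
  have hφ0 : 0 < overlapSum (1 - p) u k := overlapSum_pos (sub_pos.2 hp1) hk hku
  have hn' : (0 : ℝ) < n := Nat.cast_pos.2 (by omega)
  have hchoose : (0 : ℝ) < n.choose 2 := Nat.cast_pos.2 (Nat.choose_pos hn)
  have hcube : (n : ℝ) ^ 3 ≤ (overlapSum (1 - p) u k)⁻¹ ^ 2 := by
    calc (n : ℝ) ^ 3 = (exp (-(3 / 2) * log n))⁻¹ ^ 2 := by
          rw [← Real.exp_neg, ← Real.exp_nat_mul, ← Real.exp_log (pow_pos hn' 3), Real.log_pow]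
          congr 1
          push_cast
          ring
      _ ≤ (overlapSum (1 - p) u k)⁻¹ ^ 2 := by gcongr
  have hexponent : 2 * n ≤ 2 * (overlapSum (1 - p) u k)⁻¹ ^ 2 / n.choose 2 := by
    rw [le_div_iff₀ hchoose]
    calc (2 * n * n.choose 2 : ℝ) ≤ 2 * n * n ^ 2 := by
          refine mul_le_mul_of_nonneg_left ?_ (by positivity)
          exact_mod_cast Nat.choose_le_pow n 2
      _ = 2 * n ^ 3 := by ring
      _ ≤ _ := by gcongr
  calc 2 ^ n * exp (-2 * (overlapSum (1 - p) u k)⁻¹ ^ 2 / n.choose 2)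
      ≤ exp 1 ^ n * exp (-(2 * n)) := by
        rw [neg_mul, neg_div]
        gcongr
        linarith [Real.add_one_le_exp 1]
    _ = exp (-n) := by
        rw [← Real.exp_nat_mul, ← Real.exp_add]
        ring_nf

theorem holdsWhp_hasLocalIndepSets {δ η : ℝ} (hδ : 0 < δ) (hδη : 8 * δ ≤ η)
    (hδ1 : δ ≤ 1 / 12) {u k : ℕ → ℕ} (hk : Tendsto k atTop atTop)
    (hkL : ∀ᶠ n : ℕ in atTop, (k n : ℝ) ≤ (2 - η) * logb (1 / (1 - p)) n)
    (hu : ∀ᶠ n : ℕ in atTop, (n : ℝ) ^ (1 - δ) ≤ u n) :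
    HoldsWhp p fun n G => HasLocalIndepSets G (u n) (k n) := by
  have hq : 0 < 1 - p := sub_pos.2 hp1
  have hlogq : 0 < -log (1 - p) := neg_pos.2 (Real.log_neg hq (by linarith))
  have hkx : ∀ᶠ n : ℕ in atTop, -log (1 - p) * k n ≤ (2 - η) * log n := by
    filter_upwards [hkL] with n hn
    rwa [logb, one_div, Real.log_inv, mul_div_assoc', le_div_iff₀' hlogq] at hn
  have hlog : Tendsto (fun n : ℕ => log n) atTop atTop :=
    Real.tendsto_log_atTop.comp tendsto_natCast_atTop_atTop
  have hk2 := (isLittleO_pow_natCast_rpow (isBigO_log_of_le_mul_logb hkL) 2 hδ).eventuallyLE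
  refine holdsWhp_of_eventually_le (Real.tendsto_exp_neg_atTop_nhds_zero.comp
    tendsto_natCast_atTop_atTop) ?_
  filter_upwards [hkx, hu, hk2, eventually_ge_atTop 2, hk.eventually_ge_atTop 2,
    (tendsto_natCast_atTop_atTop.comp hk).eventually_ge_atTop (8 / η),
    (hlog.const_mul_atTop hδ).eventually_ge_atTop (-log (1 - p))]
    with n hkx hu hk2 hn hk hkη hlogn
  have hn1 : (1 : ℝ) ≤ n := by exact_mod_cast (by omega : 1 ≤ n)
  have hexp (c : ℝ) : (n : ℝ) ^ c = exp (c * log n) := by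
    rw [rpow_def_of_pos (by linarith), mul_comm]
  have hk1 : (1 : ℝ) ≤ k n := by exact_mod_cast (by omega : 1 ≤ k n)
  simp only [norm_pow, RCLike.norm_natCast, Real.norm_of_nonneg (rpow_nonneg n.cast_nonneg _)]
    at hk2
  have hkδ : (k n : ℝ) ≤ n ^ δ := (le_self_pow₀ hk1 two_ne_zero).trans hk2
  have hku : k n ≤ u n := by
    exact_mod_cast hkδ.trans ((rpow_le_rpow_of_exponent_le hn1 (by linarith)).trans hu)
  refine (erMeasure_real_not_hasLocalIndepSets_le hp0.le hp1 hk hku).trans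
    (two_pow_mul_exp_overlapSum_le hp1 hn hk hku ?_)
  rw [hexp] at hu hk2 hkδ
  calc overlapSum (1 - p) (u n) (k n) ≤ k n * exp (-(2 - 5 * δ) * log n) :=
        overlapSum_le hq (by linarith) (Real.log_nonneg hn1) hlogn hδη
          (by rwa [Function.comp_apply, div_le_iff₀' (by linarith)] at hkη) hkx hk2 hu
    _ ≤ exp (δ * log n) * exp (-(2 - 5 * δ) * log n) := by gcongr
    _ ≤ exp (-(3 / 2) * log n) := by
        rw [← Real.exp_add, ← add_mul]
        gcongr
        linarith

end Typical

section HasPath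

variable {V : Type*} {H : SimpleGraph V} {u v : V} {l m : ℕ}

/-- `u` and `v` are joined by a path of length `l` in `H`. -/
def HasPath (H : SimpleGraph V) (u v : V) (l : ℕ) : Prop :=
  ∃ w : H.Walk u v, w.IsPath ∧ w.length = l

theorem HasPath.symm (h : HasPath H u v l) : HasPath H v u l := by
  obtain ⟨w, hw, rfl⟩ := h
  exact ⟨w.reverse, hw.reverse, w.length_reverse⟩

theorem HasPath.mono {K : SimpleGraph V} (hHK : H ≤ K) (h : HasPath H u v l) :
    HasPath K u v l := by
  obtain ⟨w, hw, rfl⟩ := h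
  exact ⟨w.mapLe hHK, hw.mapLe hHK, w.length_map _⟩

theorem hasPath_of_injOn {g : ℕ → V} (hadj : ∀ i < l, H.Adj (g i) (g (i + 1)))
    (hinj : Set.InjOn g (Set.Iic l)) : HasPath H (g 0) (g l) l := by
  suffices h : ∃ w : H.Walk (g 0) (g l), w.IsPath ∧ w.length = l ∧ ∀ x ∈ w.support, ∃ i ≤ l, g i = x
    from h.imp fun _ h => ⟨h.1, h.2.1⟩
  induction l with
  | zero => exact ⟨.nil, .nil, rfl, by simp⟩
  | succ l ih =>
    obtain ⟨w, hw, hwl, hsupp⟩ := ih (fun i hi => hadj i (by omega))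
      (hinj.mono (Set.Iic_subset_Iic.2 l.le_succ))
    refine ⟨w.concat (hadj l l.lt_succ_self), hw.concat (fun hmem => ?_) _, by simp [hwl], ?_⟩
    · obtain ⟨i, hi, hgi⟩ := hsupp _ hmem
      exact absurd (hinj (Set.mem_Iic.2 (by omega)) (Set.mem_Iic.2 le_rfl) hgi) (by omega)
    · simp only [SimpleGraph.Walk.support_concat, List.mem_append,
        List.mem_singleton]
      rintro x (hx | rfl)
      · obtain ⟨i, hi, rfl⟩ := hsupp x hx
        exact ⟨i, by omega, rfl⟩
      · exact ⟨l + 1, le_rfl, rfl⟩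

theorem cycGraph_adj {a b : ZMod m} :
    (cycGraph m).Adj a b ↔ a ≠ b ∧ (a = b + 1 ∨ b = a + 1) :=
  SimpleGraph.fromRel_adj _ _ _

theorem cycGraph_adj_add_one (hm : 2 ≤ m) (a : ZMod m) : (cycGraph m).Adj a (a + 1) := by
  have : Fact (1 < m) := ⟨hm⟩
  exact cycGraph_adj.2 ⟨fun h => one_ne_zero (left_eq_add.1 h), Or.inr rfl⟩

theorem containsCopy_cycGraph_of_forall_adj {f : ZMod m → V} (hf : Function.Injective f)
    (hadj : ∀ a, H.Adj (f a) (f (a + 1))) : ContainsCopy (cycGraph m) H := by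
  refine ⟨f, hf, fun a b hab => ?_⟩
  rcases (cycGraph_adj.1 hab).2 with rfl | rfl
  exacts [(hadj b).symm, hadj a]

theorem containsCopy_cycGraph_of_hasPath (hm : 2 ≤ m) (h : HasPath H u v (m - 1))
    (huv : H.Adj u v) : ContainsCopy (cycGraph m) H := by
  obtain ⟨w, hw, hwl⟩ := h
  have : NeZero m := ⟨by omega⟩
  have : Fact (1 < m) := ⟨hm⟩
  refine containsCopy_cycGraph_of_forall_adj (f := fun a => w.getVert a.val)
    (fun a b hab => ?_) fun a => ?_
  · have ha := a.val_lt
    have hb := b.val_lt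
    exact ZMod.val_injective m (hw.getVert_injOn (Set.mem_ofPred.2 (by omega))
      (Set.mem_ofPred.2 (by omega)) hab)
  · have ha := a.val_lt
    have hval : (a + 1).val = (a.val + 1) % m := by rw [ZMod.val_add, ZMod.val_one]
    by_cases hlast : a.val = m - 1
    · rw [hval, hlast, Nat.sub_add_cancel (by omega), Nat.mod_self, ← hwl, w.getVert_length,
        w.getVert_zero]
      exact huv.symm
    · rw [hval, Nat.mod_eq_of_lt (by omega)]
      exact w.adj_getVert_succ (by omega)

theorem natCast_zmod_injOn_Iio : Set.InjOn (fun i : ℕ => (i : ZMod m)) (Set.Iio m) := by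
  intro i hi j hj h
  rw [Set.mem_Iio] at hi hj
  rwa [ZMod.natCast_eq_natCast_iff', Nat.mod_eq_of_lt hi, Nat.mod_eq_of_lt hj] at h

theorem natCast_zmod_ne_zero {i : ℕ} (hi : 0 < i) (him : i < m) : (i : ZMod m) ≠ 0 := fun h =>
  hi.ne' <| natCast_zmod_injOn_Iio him (hi.trans him) (by simpa using h)

theorem eq_of_mk_add_one_eq_mk_add_one (hm : 3 ≤ m) {f : ZMod m → V} (hf : Function.Injective f)
    {a b : ZMod m} (h : s(f a, f (a + 1)) = s(f b, f (b + 1))) : a = b := by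
  rcases Sym2.eq_iff.1 h with ⟨h, -⟩ | ⟨h₁, h₂⟩
  · exact hf h
  · refine absurd ?_ (natCast_zmod_ne_zero (m := m) two_pos (by omega))
    push_cast
    linear_combination hf h₂ - hf h₁

theorem hasPath_of_forall_ne_adj {f : ZMod m → V} (hf : Function.Injective f) (a : ZMod m)
    (hm : m ≠ 0) (hadj : ∀ b ≠ a, H.Adj (f b) (f (b + 1))) :
    HasPath H (f (a + 1)) (f a) (m - 1) := by
  have hcast : a + 1 + ((m - 1 : ℕ) : ZMod m) = a := by
    rw [Nat.cast_sub (by omega), ZMod.natCast_self]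
    ring
  have hpath : HasPath H (f (a + 1 + (0 : ℕ))) (f (a + 1 + (m - 1 : ℕ))) (m - 1) := by
    refine hasPath_of_injOn (g := fun i : ℕ => f (a + 1 + i)) (fun i hi => ?_) ?_
    · rw [Nat.cast_succ, ← add_assoc]
      refine hadj _ fun h => natCast_zmod_ne_zero (m := m) i.succ_pos (by omega) ?_
      push_cast
      linear_combination h
    · intro i hi j hj h
      rw [Set.mem_Iic] at hi hj
      exact natCast_zmod_injOn_Iio (Set.mem_Iio.2 (by omega)) (Set.mem_Iio.2 (by omega))
        (add_left_cancel (hf h))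
  rwa [hcast, Nat.cast_zero, add_zero] at hpath

theorem hasPath_of_containsCopy_sup_edge (hm : 3 ≤ m) (hfree : ¬ ContainsCopy (cycGraph m) H)
    (hcopy : ContainsCopy (cycGraph m) (H ⊔ SimpleGraph.fromEdgeSet {s(u, v)})) :
    HasPath H u v (m - 1) := by
  obtain ⟨f, hf, hadj⟩ := hcopy
  obtain ⟨a, ha⟩ : ∃ a, ¬ H.Adj (f a) (f (a + 1)) := by
    by_contra! h
    exact hfree (containsCopy_cycGraph_of_forall_adj hf h)
  have hnew (b : ZMod m) (hb : ¬ H.Adj (f b) (f (b + 1))) : s(f b, f (b + 1)) = s(u, v) := by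
    have h := hadj (cycGraph_adj_add_one (by omega) b)
    rw [SimpleGraph.sup_adj, SimpleGraph.fromEdgeSet_adj] at h
    exact (h.resolve_left hb).1
  have hpath : HasPath H (f (a + 1)) (f a) (m - 1) := by
    refine hasPath_of_forall_ne_adj hf a (by omega) fun b hba => of_not_not fun hb => hba ?_
    exact eq_of_mk_add_one_eq_mk_add_one hm hf ((hnew b hb).trans (hnew a ha).symm)
  rcases Sym2.eq_iff.1 (hnew a ha) with ⟨h₁, h₂⟩ | ⟨h₁, h₂⟩
  · exact h₁ ▸ h₂ ▸ hpath.symm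
  · exact h₁ ▸ h₂ ▸ hpath

theorem IsSaturatedIn.hasPath {G : SimpleGraph V} (hm : 3 ≤ m)
    (hH : IsSaturatedIn G H (cycGraph m)) (hG : G.Adj u v) (hHuv : ¬ H.Adj u v) :
    HasPath H u v (m - 1) :=
  hasPath_of_containsCopy_sup_edge hm hH.2.1 (hH.2.2 u v hG hHuv)

end HasPath

section HangingForest

variable {V : Type*}

/-- A forest hanging off the vertex set `C` in `H`: following `parent` leads from every vertex
into `C`, and the edges of `H` not inside `C` are those joining a vertex outside `C` to its
parent. -/
structure HangingForest (H : SimpleGraph V) (C : Set V) where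
  /-- The parent of a vertex; its value on `C` is irrelevant. -/
  parent : V → V
  exists_iterate_mem (v : V) : ∃ i, parent^[i] v ∈ C
  adj_cases ⦃x y : V⦄ : H.Adj x y →
    (x ∈ C ∧ y ∈ C) ∨ (x ∉ C ∧ parent x = y) ∨ (y ∉ C ∧ parent y = x)

namespace HangingForest

variable {G H : SimpleGraph V} {C : Set V} (K : HangingForest H C) {u v : V}

open Classical in
/-- The distance from `v` to `C` in the forest. -/
noncomputable def height (v : V) : ℕ := Nat.find (K.exists_iterate_mem v)

/-- The vertex of `C` whose tree contains `v`. -/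
noncomputable def root (v : V) : V := K.parent^[K.height v] v

open Classical in
theorem root_mem (v : V) : K.root v ∈ C := Nat.find_spec (K.exists_iterate_mem v)

open Classical in
theorem height_le_of_iterate_mem {i : ℕ} (hi : K.parent^[i] v ∈ C) : K.height v ≤ i :=
  Nat.find_min' _ hi

open Classical in
theorem height_eq_zero : K.height v = 0 ↔ v ∈ C := Nat.find_eq_zero _

open Classical in
theorem height_of_notMem (hv : v ∉ C) : K.height v = K.height (K.parent v) + 1 := by
  refine (Nat.find_eq_iff _).2 ⟨K.root_mem (K.parent v), fun i hi hmem => ?_⟩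
  cases i with
  | zero => exact hv hmem
  | succ i => exact Nat.find_min _ (Nat.succ_lt_succ_iff.1 hi) hmem

theorem root_of_mem (hv : v ∈ C) : K.root v = v := by
  rw [root, K.height_eq_zero.2 hv, Function.iterate_zero_apply]

theorem root_of_notMem (hv : v ∉ C) : K.root v = K.root (K.parent v) := by
  rw [root, K.height_of_notMem hv, Function.iterate_succ_apply, root]

theorem height_eq_and_root_eq_of_parent_notMem_support (w : H.Walk u v) (hw : w.IsPath) (hu : u ∉ C)
    (hpar : K.parent u ∉ w.support) :
    K.height v = K.height u + w.length ∧ K.root v = K.root u := by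
  induction w with
  | nil => simp
  | @cons u y v huy w ih =>
    rw [SimpleGraph.Walk.cons_isPath_iff] at hw
    rcases K.adj_cases huy with h | h | ⟨hy, rfl⟩
    · exact absurd h.1 hu
    · refine absurd ?_ hpar
      rw [h.2]
      exact List.mem_cons_of_mem _ w.start_mem_support
    · have := ih hw.1 hy hw.2
      rw [this.1, this.2, SimpleGraph.Walk.length_cons, K.height_of_notMem hy,
        K.root_of_notMem hy]
      exact ⟨by ring, rfl⟩

theorem root_mem_support_and_height_le_length (w : H.Walk u v) (hw : w.IsPath) (hu : u ∈ C) :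
    K.root v ∈ w.support ∧ (K.root v = u ∧ w.length = K.height v ∨
      K.root v ≠ u ∧ K.height v + 1 ≤ w.length) := by
  induction w with
  | nil => simp [K.root_of_mem hu, K.height_eq_zero.2 hu]
  | @cons u y v huy w ih =>
    rw [SimpleGraph.Walk.cons_isPath_iff] at hw
    rw [SimpleGraph.Walk.support_cons, SimpleGraph.Walk.length_cons]
    rcases K.adj_cases huy with h | h | ⟨hy, rfl⟩
    · obtain ⟨hmem, hlen⟩ := ih hw.1 h.2
      have hne : K.root v ≠ u := fun h => hw.2 (h ▸ hmem)
      exact ⟨List.mem_cons_of_mem _ hmem, Or.inr ⟨hne, by omega⟩⟩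
    · exact absurd hu h.1
    · obtain ⟨hheight, hroot⟩ := K.height_eq_and_root_eq_of_parent_notMem_support w hw.1 hy hw.2
      rw [K.root_of_notMem hy, K.root_of_mem hu] at hroot
      rw [K.height_of_notMem hy, K.height_eq_zero.2 hu] at hheight
      exact ⟨hroot ▸ List.mem_cons_self, Or.inl ⟨hroot, by omega⟩⟩

theorem length_le_or_height_add_height_lt_length (w : H.Walk u v) (hw : w.IsPath) :
    (K.root u = K.root v ∧ w.length ≤ K.height u + K.height v) ∨
      (K.root u ≠ K.root v ∧ K.height u + K.height v < w.length) := by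
  induction w with
  | nil => simp
  | @cons u y v huy w ih =>
    by_cases hu : u ∈ C
    · have := (K.root_mem_support_and_height_le_length _ hw hu).2
      rw [K.root_of_mem hu, K.height_eq_zero.2 hu]
      grind
    rw [SimpleGraph.Walk.cons_isPath_iff] at hw
    rw [SimpleGraph.Walk.length_cons]
    rcases K.adj_cases huy with h | ⟨-, rfl⟩ | ⟨hy, rfl⟩
    · exact absurd h.1 hu
    · rw [K.root_of_notMem hu, K.height_of_notMem hu]
      exact (ih hw.1).imp (And.imp_right fun _ => by omega) (And.imp_right fun _ => by omega)
    · obtain ⟨hheight, hroot⟩ := K.height_eq_and_root_eq_of_parent_notMem_support w hw.1 hy hw.2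
      rw [K.root_of_notMem hy] at hroot
      rw [K.height_of_notMem hy] at hheight
      exact Or.inl ⟨hroot.symm, by omega⟩

theorem eq_one_of_hasPath_parent {l : ℕ} (hu : u ∉ C) (hpar : K.parent u = v)
    (h : HasPath H u v l) : l = 1 := by
  obtain ⟨w, hw, rfl⟩ := h
  have hheight := K.height_of_notMem hu
  rw [hpar] at hheight
  cases w with
  | nil => omega
  | @cons _ y _ huy w =>
    rw [SimpleGraph.Walk.cons_isPath_iff] at hw
    rcases K.adj_cases huy with h | ⟨-, rfl⟩ | ⟨hy, rfl⟩
    · exact absurd h.1 hu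
    · subst hpar
      rw [SimpleGraph.Walk.length_cons, (SimpleGraph.Walk.isPath_iff_nil.1 hw.1).length_eq_zero]
    · have := (K.height_eq_and_root_eq_of_parent_notMem_support w hw.1 hy hw.2).1
      have := K.height_of_notMem hy
      omega

theorem eq_two_of_hasPath_of_parent_eq {l : ℕ} (hu : u ∉ C) (hv : v ∉ C) (huv : u ≠ v)
    (hpar : K.parent u = K.parent v) (h : HasPath H u v l) : l = 2 := by
  obtain ⟨w, hw, rfl⟩ := h
  cases w with
  | nil => exact absurd rfl huv
  | @cons _ y _ huy w =>
    rw [SimpleGraph.Walk.cons_isPath_iff] at hw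
    rcases K.adj_cases huy with h | ⟨-, rfl⟩ | ⟨hy, rfl⟩
    · exact absurd h.1 hu
    · rw [SimpleGraph.Walk.length_cons,
        K.eq_one_of_hasPath_parent hv hpar.symm (HasPath.symm ⟨w, hw.1, rfl⟩)]
    · have := (K.height_eq_and_root_eq_of_parent_notMem_support w hw.1 hy hw.2).1
      have := K.height_of_notMem hy
      have := K.height_of_notMem hu
      have := K.height_of_notMem hv
      rw [hpar] at *
      omega

theorem not_adj_of_root_ne {l : ℕ} (hsat : ∀ x y, G.Adj x y → ¬ H.Adj x y → HasPath H x y l)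
    {x y : V} (hxy : K.root x ≠ K.root y) (hl : l ≤ K.height x + K.height y)
    (hl₀ : l ≠ 0) : ¬ G.Adj x y := fun hG => by
  by_cases hH : H.Adj x y
  · rcases K.adj_cases hH with h | h | h
    · have := K.height_eq_zero.2 h.1
      have := K.height_eq_zero.2 h.2
      omega
    · exact hxy (by rw [K.root_of_notMem h.1, h.2])
    · exact hxy (by rw [K.root_of_notMem h.1, h.2])
  · obtain ⟨w, hw, rfl⟩ := hsat x y hG hH
    rcases K.length_le_or_height_add_height_lt_length w hw with h | h
    · exact hxy h.1
    · omega

theorem parent_eq_of_root_eq {l : ℕ} (hsat : ∀ x y, G.Adj x y → ¬ H.Adj x y → HasPath H x y l)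
    {x y : V} (hG : G.Adj x y) (hxy : K.root x = K.root y) (hl : K.height x + K.height y < l) :
    K.parent x = y ∨ K.parent y = x := by
  by_cases hH : H.Adj x y
  · rcases K.adj_cases hH with h | h | h
    · rw [K.root_of_mem h.1, K.root_of_mem h.2] at hxy
      exact absurd hxy hG.ne
    · exact Or.inl h.2
    · exact Or.inr h.2
  · obtain ⟨w, hw, rfl⟩ := hsat x y hG hH
    rcases K.length_le_or_height_add_height_lt_length w hw with h | h
    · omega
    · exact absurd hxy h.1

end HangingForest

end HangingForest

section Counting

variable {V : Type*} {G H : SimpleGraph V}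

theorem IsBiholeFree.exists_adj {t : ℕ} (hG : IsBiholeFree G t) {A B : Finset V} (hA : t ≤ #A)
    (hB : t ≤ #B) (hAB : Disjoint A B) : ∃ a ∈ A, ∃ b ∈ B, G.Adj a b := by
  obtain ⟨A', hA', hA't⟩ := Finset.exists_subset_card_eq hA
  obtain ⟨B', hB', hB't⟩ := Finset.exists_subset_card_eq hB
  obtain ⟨a, ha, b, hb, hab⟩ := hG A' B' hA't hB't (Finset.disjoint_of_subset_left hA'
    (Finset.disjoint_of_subset_right hB' hAB))
  exact ⟨a, hA' ha, b, hB' hb, hab⟩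

/-- In a locally dense graph, the edges inside a set of `t` vertices cannot be charged to their
endpoints with at most one edge per vertex. -/
theorem IsLocallyDense.card_lt {t : ℕ} (hG : IsLocallyDense G t) {S : Finset V} {f : V → Sym2 V}
    (hS : ∀ x ∈ S, ∀ y ∈ S, G.Adj x y → s(x, y) = f x ∨ s(x, y) = f y) : #S < t := by
  classical
  by_contra! hcard
  obtain ⟨A, hAS, hA⟩ := Finset.exists_subset_card_eq hcard
  have hsub : G.edgeSet ∩ A.sym2 ⊆ A.image f := by
    rintro e ⟨heG, heA⟩
    induction e with
    | _ x y =>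
      obtain ⟨hx, hy⟩ := Finset.mk_mem_sym2_iff.1 (Finset.mem_coe.1 heA)
      rw [Finset.mem_coe, Finset.mem_image]
      rcases hS x (hAS hx) y (hAS hy) heG with h | h
      exacts [⟨x, hx, h.symm⟩, ⟨y, hy, h.symm⟩]
  have h := Set.ncard_le_ncard hsub (Finset.finite_toSet _)
  rw [Set.ncard_coe_finset] at h
  exact absurd (hG A hA) (by have := (A.card_image_le (f := f)); omega)

theorem exists_card_filter_mem_between {W : Type*} [DecidableEq W] {D : Finset V} {f : V → W}
    {M : ℕ} (hf : ∀ w, #{v ∈ D | f v = w} ≤ M) {S : Finset W} (hS : M ≤ #{v ∈ D | f v ∈ S}) :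
    ∃ S' : Finset W, M ≤ #{v ∈ D | f v ∈ S'} ∧ #{v ∈ D | f v ∈ S'} ≤ 2 * M := by
  induction S using Finset.induction_on with
  | empty => exact ⟨∅, hS, by simp⟩
  | insert w S _ ih =>
    by_cases h : M ≤ #{v ∈ D | f v ∈ S}
    · exact ih h
    refine ⟨insert w S, hS, ?_⟩
    classical
    calc #{v ∈ D | f v ∈ insert w S} ≤ #{v ∈ D | f v = w} + #{v ∈ D | f v ∈ S} := by
          simp only [Finset.mem_insert, Finset.filter_or]
          exact Finset.card_union_le _ _
      _ ≤ 2 * M := by linarith [hf w]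

/-- If the fibres of `f` are small, they can be grouped into two large parts. -/
theorem IsBiholeFree.card_lt {W : Type*} [DecidableEq W] {t M : ℕ} (hG : IsBiholeFree G t)
    (htM : t ≤ M) {D : Finset V} {f : V → W} (hf : ∀ w, #{v ∈ D | f v = w} ≤ M)
    (hD : ∀ x ∈ D, ∀ y ∈ D, f x ≠ f y → ¬ G.Adj x y) : #D < 3 * M := by
  by_contra! hcard
  obtain ⟨S, hS₁, hS₂⟩ := exists_card_filter_mem_between hf (S := D.image f) (by
    rw [Finset.filter_true_of_mem fun v hv => Finset.mem_image_of_mem f hv]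
    omega)
  have hsum := Finset.card_filter_add_card_filter_not (s := D) (fun v => f v ∈ S)
  obtain ⟨a, ha, b, hb, hab⟩ := hG.exists_adj (htM.trans hS₁) (by omega)
    (Finset.disjoint_filter_filter_not D D fun v => f v ∈ S)
  rw [Finset.mem_filter] at ha hb
  exact hD a ha.1 b hb.1 (fun h => hb.2 (h ▸ ha.2)) hab

end Counting

namespace HangingForest

variable {V : Type*} [Fintype V] [DecidableEq V] {G H : SimpleGraph V} {C : Finset V}
  (K : HangingForest H (C : Set V)) {t l : ℕ}

theorem card_filter_parent_lt (hl : l ≠ 2) (hsat : ∀ x y, G.Adj x y → ¬ H.Adj x y → HasPath H x y l)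
    (hG : IsLocallyDense G t) (z : V) :
    #{v | v ∉ C ∧ K.parent v = z} < t := by
  refine hG.card_lt (f := fun x => s(x, x)) fun x hx y hy hxy => ?_
  simp only [Finset.mem_filter, Finset.mem_univ, true_and] at hx hy
  have hH : ¬ H.Adj x y := fun h => by
    rcases K.adj_cases h with h | ⟨-, h⟩ | ⟨-, h⟩
    · exact hx.1 h.1
    · have := K.height_of_notMem hy.1
      rw [hy.2, ← hx.2, h] at this
      omega
    · have := K.height_of_notMem hx.1
      rw [hx.2, ← hy.2, h] at this
      omega
  exact absurd (K.eq_two_of_hasPath_of_parent_eq hx.1 hy.1 hxy.ne (hx.2.trans hy.2.symm)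
    (hsat x y hxy hH)) hl

theorem card_filter_root_height_le
    (hchild : ∀ z, #{v | v ∉ C ∧ K.parent v = z} ≤ t) (r : V) (j : ℕ) :
    #{v | K.root v = r ∧ K.height v = j} ≤ t ^ j := by
  induction j with
  | zero =>
    rw [pow_zero, Finset.card_le_one]
    intro x hx y hy
    simp only [Finset.mem_filter, Finset.mem_univ, true_and, K.height_eq_zero] at hx hy
    rw [← K.root_of_mem hx.2, ← K.root_of_mem hy.2, hx.1, hy.1]
  | succ j ih =>
    have hnot {v : V} (hv : K.height v = j + 1) : v ∉ C := fun h => by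
      have := K.height_eq_zero.2 (Finset.mem_coe.2 h)
      omega
    refine (Finset.card_le_mul_card_image_of_maps_to (f := K.parent)
      (t := {v | K.root v = r ∧ K.height v = j}) (fun v hv => ?_) t fun z _ => ?_).trans ?_
    · simp only [Finset.mem_filter, Finset.mem_univ, true_and] at hv ⊢
      have := K.height_of_notMem (hnot hv.2)
      exact ⟨(K.root_of_notMem (hnot hv.2)).symm.trans hv.1, by omega⟩
    · refine (Finset.card_le_card fun v hv => ?_).trans (hchild z)
      simp only [Finset.mem_filter, Finset.mem_univ, true_and] at hv ⊢
      exact ⟨hnot hv.1.2, hv.2⟩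
    · rw [pow_succ']
      exact Nat.mul_le_mul_left t ih

theorem card_filter_root_le (hheight : ∀ v, K.height v ≤ l) (ht : 1 ≤ t)
    (hchild : ∀ z, #{v | v ∉ C ∧ K.parent v = z} ≤ t) (r : V) :
    #{v | K.root v = r} ≤ (l + 1) * t ^ l := by
  rw [mul_comm]
  refine (Finset.card_le_mul_card_image_of_maps_to (f := K.height) (t := Finset.range (l + 1))
    (fun v _ => Finset.mem_range.2 (Nat.lt_succ_of_le (hheight v))) (t ^ l) fun j hj => ?_).trans_eq
    (by rw [Finset.card_range])
  rw [Finset.filter_filter]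
  exact (K.card_filter_root_height_le hchild r j).trans
    (Nat.pow_le_pow_right ht (Nat.le_of_lt_succ (Finset.mem_range.1 hj)))

omit [DecidableEq V] in
/-- A vertex is deep if its height is at least `l / 2`, and shallow otherwise. A path between two
deep vertices of different trees is longer than `l`, one between two shallow vertices of the same
tree is shorter, so that local density bounds the number of shallow vertices of each tree, and
bihole-freeness the number of deep vertices. -/
theorem card_le (hheight : ∀ v, K.height v ≤ l) (ht : 1 ≤ t) (hl : 3 ≤ l)
    (hsat : ∀ x y, G.Adj x y → ¬ H.Adj x y → HasPath H x y l)
    (hdense : IsLocallyDense G t) (hbihole : IsBiholeFree G t) :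
    Fintype.card V ≤ #C * t + 3 * ((l + 1) * t ^ l) := by
  classical
  have hchild (z : V) : #{v | v ∉ C ∧ K.parent v = z} ≤ t :=
    (K.card_filter_parent_lt (by omega) hsat hdense z).le
  have htree := K.card_filter_root_le hheight ht hchild
  have hdeep : #{v | l ≤ 2 * K.height v} < 3 * ((l + 1) * t ^ l) := by
    refine hbihole.card_lt (f := K.root) ?_ (fun r => ?_) fun x hx y hy hxy => ?_
    · exact (Nat.le_self_pow (by omega) t).trans (Nat.le_mul_of_pos_left _ l.succ_pos)
    · exact (Finset.card_le_card (Finset.filter_subset_filter _ (Finset.subset_univ _))).trans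
        (htree r)
    · simp only [Finset.mem_filter, Finset.mem_univ, true_and] at hx hy
      exact K.not_adj_of_root_ne hsat hxy (by omega) (by omega)
  have hshallow : #{v | ¬ l ≤ 2 * K.height v} ≤ t * #C := by
    refine Finset.card_le_mul_card_image_of_maps_to (f := K.root) (fun v _ => K.root_mem v) t
      fun r _ => (hdense.card_lt (f := fun v => s(v, K.parent v)) fun x hx y hy hxy => ?_).le
    simp only [Finset.mem_filter, Finset.mem_univ, true_and] at hx hy
    rcases K.parent_eq_of_root_eq hsat hxy (hx.2.trans hy.2.symm) (by omega) with h | h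
    · exact Or.inl (by rw [h])
    · exact Or.inr (by rw [h, Sym2.eq_swap])
  rw [← Finset.card_univ, ← Finset.card_filter_add_card_filter_not fun v => l ≤ 2 * K.height v]
  linarith

end HangingForest

section SpanningForest

variable {V : Type*}

/-- A spanning forest of `H` rooted at `R` whose trees have depth at most `d`. -/
structure SpanningForest (H : SimpleGraph V) (R : Finset V) (d : ℕ) where
  /-- The parent of a vertex, the vertices of `R` being their own parents. -/
  parent : V → V
  /-- The number of edges between a vertex and the root of its tree. -/
  depth : V → ℕ
  depth_le (v : V) : depth v ≤ d
  parent_of_mem ⦃v : V⦄ : v ∈ R → parent v = v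
  adj_parent ⦃v : V⦄ : v ∉ R → H.Adj v (parent v)
  depth_of_notMem ⦃v : V⦄ : v ∉ R → depth v = depth (parent v) + 1

theorem nonempty_spanningForest {H : SimpleGraph V} {R : Finset V} {d : ℕ}
    (hR : ∀ v, ∃ r ∈ R, ∃ w : H.Walk v r, w.length ≤ d) : Nonempty (SpanningForest H R d) := by
  classical
  have hex (v : V) : ∃ l, ∃ r ∈ R, ∃ w : H.Walk v r, w.length = l := by
    obtain ⟨r, hr, w, -⟩ := hR v
    exact ⟨_, r, hr, w, rfl⟩
  have hmin {v r : V} (hr : r ∈ R) (w : H.Walk v r) : Nat.find (hex v) ≤ w.length :=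
    Nat.find_min' (hex v) ⟨r, hr, w, rfl⟩
  have hparent (v : V) : ∃ y, (v ∈ R → y = v) ∧
      (v ∉ R → H.Adj v y ∧ Nat.find (hex v) = Nat.find (hex y) + 1) := by
    by_cases hv : v ∈ R
    · exact ⟨v, fun _ => rfl, fun h => absurd hv h⟩
    obtain ⟨r, hr, w, hw⟩ := Nat.find_spec (hex v)
    cases w with
    | nil => exact absurd hr hv
    | @cons _ y _ hvy w =>
      obtain ⟨r', hr', w', hw'⟩ := Nat.find_spec (hex y)
      have h₁ := hmin hr w
      have h₂ := hmin hr' (w'.cons hvy)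
      rw [SimpleGraph.Walk.length_cons] at hw h₂
      exact ⟨y, fun h => absurd h hv, fun _ => ⟨hvy, by omega⟩⟩
  choose parent hmem hnotMem using hparent
  refine ⟨parent, fun v => Nat.find (hex v), fun v => ?_, hmem, fun v hv => (hnotMem v hv).1,
    fun v hv => (hnotMem v hv).2⟩
  obtain ⟨r, hr, w, hw⟩ := hR v
  exact (hmin hr w).trans hw

namespace SpanningForest

variable {H : SimpleGraph V} {R : Finset V} {d : ℕ} (F : SpanningForest H R d)

theorem iterate_parent_mem_or (v : V) (i : ℕ) :
    F.parent^[i] v ∈ R ∨ F.depth v = F.depth (F.parent^[i] v) + i := by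
  induction i with
  | zero => exact Or.inr rfl
  | succ i ih =>
    rw [Function.iterate_succ_apply']
    by_cases hi : F.parent^[i] v ∈ R
    · exact Or.inl (by rwa [F.parent_of_mem hi])
    · have := F.depth_of_notMem hi
      have := ih.resolve_left hi
      exact Or.inr (by omega)

theorem iterate_parent_mem (v : V) {i : ℕ} (hi : d ≤ i) : F.parent^[i] v ∈ R := by
  by_contra h
  have := (F.iterate_parent_mem_or v i).resolve_left h
  have := F.depth_of_notMem h
  have := F.depth_le v
  omega

theorem injOn_edge : Set.InjOn (fun v => s(v, F.parent v)) (Rᶜ : Set V) := by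
  intro x hx y hy hxy
  rcases Sym2.eq_iff.1 hxy with ⟨h, -⟩ | ⟨h₁, h₂⟩
  · exact h
  · have hx' := F.depth_of_notMem hx
    have hy' := F.depth_of_notMem hy
    rw [h₂] at hx'
    rw [← h₁] at hy'
    omega

variable [Fintype V] [DecidableEq V]

/-- The edges of the forest. -/
def edges : Finset (Sym2 V) := (Rᶜ).image fun v => s(v, F.parent v)

theorem card_edges_add : #F.edges + #R = Fintype.card V := by
  rw [edges, Finset.card_image_of_injOn (by simpa using F.injOn_edge), add_comm,
    Finset.card_add_card_compl]

variable [DecidableRel H.Adj]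

/-- The edges of the graph outside the forest. -/
def extraEdges : Finset (Sym2 V) := H.edgeFinset \ F.edges

theorem card_extraEdges_add : #F.extraEdges + Fintype.card V = H.edgeSet.ncard + #R := by
  have hsub : F.edges ⊆ H.edgeFinset := by
    intro e he
    obtain ⟨v, hv, rfl⟩ := Finset.mem_image.1 he
    exact SimpleGraph.mem_edgeFinset.2 (F.adj_parent (Finset.mem_compl.1 hv))
  rw [← F.card_edges_add, ← add_assoc, extraEdges, Finset.card_sdiff_add_card_eq_card hsub,
    ← SimpleGraph.coe_edgeFinset, Set.ncard_coe_finset]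

/-- The roots together with the forest paths leading from the extra edges to the roots. -/
def core : Finset V :=
  R ∪ ((F.extraEdges.biUnion Sym2.toFinset) ×ˢ Finset.range d).image fun x => F.parent^[x.2] x.1

theorem card_core_le : #F.core ≤ #R + 2 * #F.extraEdges * d := by
  refine (Finset.card_union_le _ _).trans (Nat.add_le_add_left (Finset.card_image_le.trans ?_) _)
  rw [Finset.card_product, Finset.card_range, mul_comm 2]
  refine Nat.mul_le_mul_right _ (Finset.card_biUnion_le_card_mul _ _ _ fun e _ => ?_)
  induction e with
  | _ x y =>
    exact (Finset.card_le_card fun z => by simp).trans (Finset.card_le_two (a := x) (b := y))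

theorem iterate_parent_mem_core {e : Sym2 V} (he : e ∈ F.extraEdges) {v : V} (hv : v ∈ e)
    (i : ℕ) : F.parent^[i] v ∈ F.core := by
  rcases lt_or_ge i d with hi | hi
  · refine Finset.mem_union_right _ (Finset.mem_image.2 ⟨(v, i), ?_, rfl⟩)
    simp only [Finset.mem_product, Finset.mem_biUnion, Sym2.mem_toFinset, Finset.mem_range]
    exact ⟨⟨e, he, hv⟩, hi⟩
  · exact Finset.mem_union_left _ (F.iterate_parent_mem v hi)

theorem parent_mem_core {v : V} (hv : v ∈ F.core) : F.parent v ∈ F.core := by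
  rcases Finset.mem_union.1 hv with h | h
  · rwa [F.parent_of_mem h]
  · obtain ⟨⟨x, i⟩, hx, rfl⟩ := Finset.mem_image.1 h
    simp only [Finset.mem_product, Finset.mem_biUnion, Sym2.mem_toFinset] at hx
    obtain ⟨⟨e, he, hxe⟩, -⟩ := hx
    rw [← Function.iterate_succ_apply' F.parent]
    exact F.iterate_parent_mem_core he hxe _

/-- Outside its core, the graph is a forest hanging off the core. -/
def hangingForest : HangingForest H (F.core : Set V) where
  parent := F.parent
  exists_iterate_mem v := ⟨d, Finset.mem_union_left _ (F.iterate_parent_mem v le_rfl)⟩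
  adj_cases x y hxy := by
    by_cases he : s(x, y) ∈ F.edges
    · obtain ⟨v, -, hvxy⟩ := Finset.mem_image.1 he
      rcases Sym2.eq_iff.1 hvxy with ⟨rfl, rfl⟩ | ⟨rfl, rfl⟩
      all_goals
        by_cases hv : v ∈ F.core
        · simp [hv, F.parent_mem_core hv]
        · simp [hv]
    · have he : s(x, y) ∈ F.extraEdges :=
        Finset.mem_sdiff.2 ⟨SimpleGraph.mem_edgeFinset.2 hxy, he⟩
      exact Or.inl ⟨F.iterate_parent_mem_core he (Sym2.mem_mk_left _ _) 0,
        F.iterate_parent_mem_core he (Sym2.mem_mk_right _ _) 0⟩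

theorem height_hangingForest_le (v : V) : F.hangingForest.height v ≤ d :=
  F.hangingForest.height_le_of_iterate_mem
    (Finset.mem_union_left _ (F.iterate_parent_mem v le_rfl))

end SpanningForest

end SpanningForest

section LowerBound

variable {V : Type*} {G H : SimpleGraph V} {t m : ℕ}

theorem IsBiholeFree.exists_dominating [Finite V] (hG : IsBiholeFree G t) {S : Finset V}
    (hS : t ≤ #S) (hdom : ∀ x ∉ S, ∃ w ∈ S, G.Adj x w) :
    ∃ R ⊆ S, #R ≤ 2 * t ∧ ∀ x ∉ R, ∃ r ∈ R, G.Adj x r := by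
  classical
  cases nonempty_fintype V
  obtain ⟨R₀, hR₀S, hR₀⟩ := Finset.exists_subset_card_eq hS
  let N : Finset V := {x | x ∉ R₀ ∧ ∀ r ∈ R₀, ¬ G.Adj x r}
  have hN : #N ≤ t := by
    by_contra! h
    obtain ⟨r, hr, x, hx, hrx⟩ := hG.exists_adj hR₀.ge h.le
      (Finset.disjoint_left.2 fun x hx hxN => (Finset.mem_filter.1 hxN).2.1 hx)
    exact (Finset.mem_filter.1 hx).2.2 r hr hrx.symm
  have hself (x : V) : ∃ w ∈ S, w = x ∨ G.Adj x w := by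
    by_cases hx : x ∈ S
    · exact ⟨x, hx, Or.inl rfl⟩
    · exact (hdom x hx).imp fun w hw => hw.imp_right Or.inr
  choose f hfS hf using hself
  refine ⟨R₀ ∪ N.image f, Finset.union_subset hR₀S (Finset.image_subset_iff.2 fun x _ => hfS x),
    ?_, fun x hx => ?_⟩
  · have := Finset.card_union_le R₀ (N.image f)
    have := N.card_image_le (f := f)
    omega
  by_cases hxR₀ : ∃ r ∈ R₀, G.Adj x r
  · exact hxR₀.imp fun r hr => hr.imp_left (Finset.mem_union_left _)
  have hfx : f x ∈ R₀ ∪ N.image f := by grind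
  exact ⟨f x, hfx, (hf x).resolve_left fun h => hx (h ▸ hfx)⟩

variable [Fintype V]

theorem card_le_of_isSaturatedIn_cycGraph (hm : 5 ≤ m) (ht : 1 ≤ t) (htV : t ≤ Fintype.card V)
    (hdense : IsLocallyDense G t) (hbihole : IsBiholeFree G t)
    (hH : IsSaturatedIn G H (cycGraph m)) :
    (Fintype.card V : ℝ) ≤ (2 * t + 2 * ((m : ℝ) - 1) *
      (H.edgeSet.ncard - Fintype.card V + 2 * t)) * t + 3 * (m * t ^ (m - 1)) := by
  classical
  have hsat (x y : V) : G.Adj x y → ¬ H.Adj x y → HasPath H x y (m - 1) :=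
    hH.hasPath (by omega)
  obtain ⟨R, -, hR, hdom⟩ := hbihole.exists_dominating (S := Finset.univ) (by simpa using htV)
    (by simp)
  obtain ⟨F⟩ : Nonempty (SpanningForest H R (m - 1)) := nonempty_spanningForest fun v => by
    by_cases hv : v ∈ R
    · exact ⟨v, hv, .nil, Nat.zero_le _⟩
    obtain ⟨r, hr, hvr⟩ := hdom v hv
    by_cases hHvr : H.Adj v r
    · refine ⟨r, hr, hHvr.toWalk, ?_⟩
      rw [SimpleGraph.Walk.length_cons, SimpleGraph.Walk.length_nil]
      omega
    · obtain ⟨w, -, hw⟩ := hsat v r hvr hHvr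
      exact ⟨r, hr, w, hw.le⟩
  have hcard := F.hangingForest.card_le F.height_hangingForest_le ht (by omega) hsat hdense hbihole
  have hm1 : ((m - 1 : ℕ) : ℝ) = m - 1 := Nat.cast_pred (by omega)
  rw [Nat.sub_add_cancel (by omega)] at hcard
  have hextra : (#F.extraEdges : ℝ) + Fintype.card V = H.edgeSet.ncard + #R :=
    mod_cast F.card_extraEdges_add
  have hcore : (#F.core : ℝ) ≤ #R + 2 * #F.extraEdges * (m - 1) := by
    rw [← hm1]
    exact_mod_cast F.card_core_le
  have hR' : (#R : ℝ) ≤ 2 * t := mod_cast hR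
  have hm' : (0 : ℝ) ≤ m - 1 := by rw [← hm1]; positivity
  calc (Fintype.card V : ℝ) ≤ #F.core * t + 3 * (m * t ^ (m - 1)) := mod_cast hcard
    _ ≤ (#R + 2 * #F.extraEdges * (m - 1)) * t + 3 * (m * t ^ (m - 1)) := by gcongr
    _ = (#R + 2 * (m - 1) * (H.edgeSet.ncard - Fintype.card V + #R)) * t +
        3 * (m * t ^ (m - 1)) := by
      rw [eq_sub_of_add_eq hextra]
      ring
    _ ≤ _ := by gcongr

end LowerBound

section Saturation

variable {V α : Type*} {F : SimpleGraph α} {G H : SimpleGraph V}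

theorem ContainsCopy.mono {K : SimpleGraph V} (hHK : H ≤ K) (h : ContainsCopy F H) :
    ContainsCopy F K :=
  h.imp fun _ hf => ⟨hf.1, fun _ _ hab => hHK (hf.2 hab)⟩

theorem not_containsCopy_bot (hF : F ≠ ⊥) : ¬ ContainsCopy F (⊥ : SimpleGraph V) := by
  rintro ⟨f, -, hf⟩
  obtain ⟨a, b, hab⟩ := SimpleGraph.ne_bot_iff_exists_adj.1 hF
  exact hf hab

theorem cycGraph_ne_bot {m : ℕ} (hm : 2 ≤ m) : cycGraph m ≠ ⊥ :=
  SimpleGraph.ne_bot_iff_exists_adj.2 ⟨0, _, cycGraph_adj_add_one hm 0⟩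

theorem satNum_le_ncard_edgeSet (h : IsSaturatedIn G H F) : satNum G F ≤ H.edgeSet.ncard :=
  Nat.sInf_le ⟨H, h, rfl⟩

theorem fromEdgeSet_singleton_le {u v : V} (huv : H.Adj u v) :
    SimpleGraph.fromEdgeSet {s(u, v)} ≤ H :=
  (SimpleGraph.edge_le_iff H).2 (Or.inr huv)

theorem exists_le_isSaturatedIn [Finite V] (hHG : H ≤ G) (hfree : ¬ ContainsCopy F H) :
    ∃ K, H ≤ K ∧ IsSaturatedIn G K F := by
  obtain ⟨K, hHK, hK⟩ :=
    Finite.exists_le_maximal (p := fun K => K ≤ G ∧ ¬ ContainsCopy F K) ⟨hHG, hfree⟩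
  refine ⟨K, hHK, hK.prop.1, hK.prop.2, fun u v hG hKuv => of_not_not fun h => hKuv ?_⟩
  have hle := hK.le_of_ge ⟨sup_le hK.prop.1 (fromEdgeSet_singleton_le hG), h⟩ le_sup_left
  exact hle (Or.inr ⟨rfl, hG.ne⟩)

theorem exists_isSaturatedIn_ncard_edgeSet_eq_satNum [Finite V] (G : SimpleGraph V) (hF : F ≠ ⊥) :
    ∃ H, IsSaturatedIn G H F ∧ H.edgeSet.ncard = satNum G F := by
  obtain ⟨H, -, hH⟩ := exists_le_isSaturatedIn (bot_le : ⊥ ≤ G) (not_containsCopy_bot hF)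
  exact Nat.sInf_mem (s := {k | ∃ H, IsSaturatedIn G H F ∧ H.edgeSet.ncard = k})
    ⟨_, H, hH, rfl⟩

theorem satNum_le_ncard_edgeSet_add_card [Finite V] (hHG : H ≤ G) (hfree : ¬ ContainsCopy F H)
    {B : Finset (Sym2 V)} (hB : ∀ x y, G.Adj x y → ¬ H.Adj x y →
      s(x, y) ∈ B ∨ ContainsCopy F (H ⊔ SimpleGraph.fromEdgeSet {s(x, y)})) :
    satNum G F ≤ H.edgeSet.ncard + #B := by
  obtain ⟨K, hHK, hK⟩ := exists_le_isSaturatedIn hHG hfree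
  have hsub : K.edgeSet ⊆ H.edgeSet ∪ B := by
    intro e he
    induction e with
    | _ x y =>
      by_cases hHxy : H.Adj x y
      · exact Or.inl hHxy
      · exact Or.inr <| (hB x y (hK.1 he) hHxy).resolve_right fun h =>
          hK.2.1 (h.mono (sup_le hHK (fromEdgeSet_singleton_le he)))
  calc satNum G F ≤ K.edgeSet.ncard := satNum_le_ncard_edgeSet hK
    _ ≤ (H.edgeSet ∪ B).ncard := Set.ncard_le_ncard hsub (Set.toFinite _)
    _ ≤ H.edgeSet.ncard + #B := by
      rw [← Set.ncard_coe_finset]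
      exact Set.ncard_union_le _ _

end Saturation

section HasPathIn

variable {V : Type*} {H : SimpleGraph V} {S : Set V} {u v w : V} {l : ℕ}

/-- `u` and `v` are joined in `H` by a path of length `l` all of whose vertices lie in `S`. -/
def HasPathIn (H : SimpleGraph V) (S : Set V) (u v : V) (l : ℕ) : Prop :=
  ∃ w : H.Walk u v, w.IsPath ∧ w.length = l ∧ ∀ x ∈ w.support, x ∈ S

theorem HasPathIn.hasPath (h : HasPathIn H S u v l) : HasPath H u v l :=
  h.imp fun _ h => ⟨h.1, h.2.1⟩

theorem hasPathIn_singleton (u : V) : HasPathIn H {u} u u 0 := ⟨.nil, .nil, rfl, by simp⟩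

theorem HasPathIn.symm (h : HasPathIn H S u v l) : HasPathIn H S v u l := by
  obtain ⟨w, hw, rfl, hS⟩ := h
  exact ⟨w.reverse, hw.reverse, w.length_reverse, by simpa using hS⟩

theorem HasPathIn.cons (h : HasPathIn H S u v l) (hw : H.Adj w u) (hwS : w ∉ S) :
    HasPathIn H (insert w S) w v (l + 1) := by
  obtain ⟨p, hp, rfl, hS⟩ := h
  refine ⟨p.cons hw, hp.cons fun h => hwS (hS w h), rfl, fun x hx => ?_⟩
  rcases List.mem_cons.1 hx with rfl | hx
  exacts [Set.mem_insert _ _, Set.mem_insert_of_mem _ (hS x hx)]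

theorem HasPathIn.concat (h : HasPathIn H S u v l) (hw : H.Adj v w) (hwS : w ∉ S) :
    HasPathIn H (insert w S) u w (l + 1) :=
  (h.symm.cons hw.symm hwS).symm

theorem hasPathIn_of_isClique {Q : Finset V} (hQ : H.IsClique Q) (hu : u ∈ Q) (hv : v ∈ Q)
    (huv : u ≠ v) (hl : 1 ≤ l) (hlQ : l < #Q) : HasPathIn H Q u v l := by
  classical
  induction l, hl using Nat.le_induction generalizing Q u with
  | base =>
    refine ⟨(hQ hu hv huv).toWalk, (hQ hu hv huv).isPath_toWalk, rfl, ?_⟩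
    simp [hu, hv]
  | succ l hl ih =>
    obtain ⟨w, hw, hwuv⟩ := Finset.exists_mem_notMem_of_card_lt_card
      (s := {u, v}) (t := Q) (Finset.card_le_two.trans_lt (by omega))
    simp only [Finset.mem_insert, Finset.mem_singleton, not_or] at hwuv
    have hpath := ih (Q := Q.erase u) (u := w)
      (hQ.subset (Finset.coe_subset.2 (Finset.erase_subset u Q)))
      (Finset.mem_erase.2 ⟨hwuv.1, hw⟩) (Finset.mem_erase.2 ⟨huv.symm, hv⟩) hwuv.2
      (by rw [Finset.card_erase_of_mem hu]; omega)
    have h := hpath.cons (hQ hu hw (Ne.symm hwuv.1)) (by simp)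
    rwa [← Finset.coe_insert, Finset.insert_erase hu] at h

end HasPathIn

section Skeleton

variable {V : Type*} {G : SimpleGraph V} {m : ℕ}

/-- The data of a `C_m`-free subgraph of `G` that is nearly `C_m`-saturated: a clique on `m - 2`
vertices with two hubs, a set of holders adjacent to both hubs, and for each other vertex (a leaf)
a holder to which it is attached. -/
structure Skeleton (G : SimpleGraph V) (m : ℕ) where
  /-- The clique. -/
  clique : Finset V
  /-- The holders. -/
  holders : Finset V
  /-- The first hub. -/
  hub₁ : V
  /-- The second hub. -/
  hub₂ : V
  /-- The holder of a leaf; its value at other vertices is irrelevant. -/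
  attach : V → V
  card_clique_add_two : #clique + 2 = m
  isClique : G.IsClique clique
  hub₁_mem : hub₁ ∈ clique
  hub₂_mem : hub₂ ∈ clique
  hub_ne : hub₁ ≠ hub₂
  disjoint : Disjoint clique holders
  one_lt_card_holders : 1 < #holders
  adj_hub₁ ⦃w : V⦄ : w ∈ holders → G.Adj w hub₁
  adj_hub₂ ⦃w : V⦄ : w ∈ holders → G.Adj w hub₂
  attach_mem ⦃x : V⦄ : x ∉ clique → x ∉ holders → attach x ∈ holders
  adj_attach ⦃x : V⦄ : x ∉ clique → x ∉ holders → G.Adj x (attach x)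

namespace Skeleton

variable (S : Skeleton G m) {v w x y z : V}

/-- The vertices of the skeleton outside the clique and the holders. -/
def IsLeaf (x : V) : Prop := x ∉ S.clique ∧ x ∉ S.holders

/-- The edges of the skeleton, each listed in one of its two orientations. -/
def Rel (x y : V) : Prop :=
  (x ∈ S.clique ∧ y ∈ S.clique) ∨ (x ∈ S.holders ∧ (y = S.hub₁ ∨ y = S.hub₂)) ∨
    (S.IsLeaf x ∧ y = S.attach x)

/-- The subgraph of `G` described by the skeleton. -/
def graph : SimpleGraph V := SimpleGraph.fromRel S.Rel

variable {S}

theorem notMem_clique (hw : w ∈ S.holders) : w ∉ S.clique :=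
  Finset.disjoint_right.1 S.disjoint hw

theorem IsLeaf.attach_mem (hx : S.IsLeaf x) : S.attach x ∈ S.holders := S.attach_mem hx.1 hx.2

theorem mem_or_mem_of_not_isLeaf (hx : ¬ S.IsLeaf x) : x ∈ S.clique ∨ x ∈ S.holders := by
  rwa [IsLeaf, not_and_or, not_not, not_not] at hx

theorem graph_le : S.graph ≤ G := by
  have h : ∀ x y, S.Rel x y → x ≠ y → G.Adj x y := by
    rintro x y (⟨hx, hy⟩ | ⟨hx, rfl | rfl⟩ | ⟨hx, rfl⟩) hxy
    exacts [S.isClique hx hy hxy, S.adj_hub₁ hx, S.adj_hub₂ hx, S.adj_attach hx.1 hx.2]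
  rintro x y ⟨hxy, hrel | hrel⟩
  exacts [h x y hrel hxy, (h y x hrel hxy.symm).symm]

theorem isClique_graph : S.graph.IsClique S.clique := fun _ hx _ hy hxy =>
  ⟨hxy, Or.inl (Or.inl ⟨hx, hy⟩)⟩

theorem graph_adj_hub₁ (hw : w ∈ S.holders) : S.graph.Adj w S.hub₁ :=
  ⟨(S.adj_hub₁ hw).ne, Or.inl (Or.inr (Or.inl ⟨hw, Or.inl rfl⟩))⟩

theorem graph_adj_hub₂ (hw : w ∈ S.holders) : S.graph.Adj w S.hub₂ :=
  ⟨(S.adj_hub₂ hw).ne, Or.inl (Or.inr (Or.inl ⟨hw, Or.inr rfl⟩))⟩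

theorem IsLeaf.graph_adj_attach (hx : S.IsLeaf x) : S.graph.Adj x (S.attach x) :=
  ⟨(S.adj_attach hx.1 hx.2).ne, Or.inl (Or.inr (Or.inr ⟨hx, rfl⟩))⟩

theorem IsLeaf.eq_attach (hx : S.IsLeaf x) (hxy : S.graph.Adj x y) : y = S.attach x := by
  have := S.hub₁_mem
  have := S.hub₂_mem
  have := @IsLeaf.attach_mem _ _ _ S y
  obtain ⟨-, h | h⟩ := hxy <;> grind [Rel, IsLeaf]

theorem eq_hub_of_graph_adj (hw : w ∈ S.holders) (hy : ¬ S.IsLeaf y) (hwy : S.graph.Adj w y) :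
    y = S.hub₁ ∨ y = S.hub₂ := by
  have := notMem_clique hw
  have := notMem_clique (S := S) (w := S.hub₁)
  have := S.hub₁_mem
  have := S.hub₂_mem
  obtain ⟨-, h | h⟩ := hwy <;> grind [Rel, IsLeaf]

section CycleFree

variable {f : ZMod m → V}

theorem not_isLeaf_of_forall_adj (hm : 3 ≤ m) (hf : Function.Injective f)
    (hadj : ∀ a, S.graph.Adj (f a) (f (a + 1))) (a : ZMod m) : ¬ S.IsLeaf (f a) := fun ha => by
  have hprev := ha.eq_attach (y := f (a - 1)) (by simpa using (hadj (a - 1)).symm)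
  have hnext := ha.eq_attach (hadj a)
  refine natCast_zmod_ne_zero (m := m) two_pos (by omega) ?_
  push_cast
  linear_combination hf (hnext.trans hprev.symm)

-- A cycle through two holders visits both hubs on either side of each, hence has length four.
theorem eq_of_mem_holders (hm : 5 ≤ m) (hf : Function.Injective f)
    (hadj : ∀ a, S.graph.Adj (f a) (f (a + 1))) {a b : ZMod m} (ha : f a ∈ S.holders)
    (hb : f b ∈ S.holders) : a = b := by
  have hleaf := not_isLeaf_of_forall_adj (by omega) hf hadj
  have hnext {c : ZMod m} (hc : f c ∈ S.holders) := eq_hub_of_graph_adj hc (hleaf _) (hadj c)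
  have hprev {c : ZMod m} (hc : f c ∈ S.holders) :=
    eq_hub_of_graph_adj hc (hleaf (c - 1)) (by simpa using (hadj (c - 1)).symm)
  have hne (c : ZMod m) : f (c - 1) ≠ f (c + 1) := fun h => by
    refine natCast_zmod_ne_zero (m := m) two_pos (by omega) ?_
    push_cast
    linear_combination -hf h
  by_contra hab
  have : f (a + 1) ≠ f (b + 1) := fun h => hab (add_right_cancel (hf h))
  have : f (a - 1) ≠ f (b - 1) := fun h => hab (sub_left_injective (hf h))
  have hcross : f (a + 1) = f (b - 1) ∧ f (a - 1) = f (b + 1) := by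
    grind
  refine natCast_zmod_ne_zero (m := m) four_pos (by omega) ?_
  push_cast
  linear_combination hf hcross.1 - hf hcross.2

variable (S) in
theorem not_containsCopy_cycGraph (hm : 5 ≤ m) : ¬ ContainsCopy (cycGraph m) S.graph := by
  classical
  rintro ⟨f, hf, hcopy⟩
  have : NeZero m := ⟨by omega⟩
  have hadj (a : ZMod m) := hcopy (cycGraph_adj_add_one (by omega) a)
  have hholders : #{a | f a ∈ S.holders} ≤ 1 := Finset.card_le_one.2 fun a ha b hb =>
    eq_of_mem_holders hm hf hadj (Finset.mem_filter.1 ha).2 (Finset.mem_filter.1 hb).2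
  have hclique : #{a | f a ∉ S.holders} ≤ #S.clique := by
    refine Finset.card_le_card_of_injOn f (fun a ha => ?_) hf.injOn
    exact (mem_or_mem_of_not_isLeaf (not_isLeaf_of_forall_adj (by omega) hf hadj a)).resolve_right
      (Finset.mem_filter.1 ha).2
  have hcard := Finset.card_filter_add_card_filter_not (s := (Finset.univ : Finset (ZMod m)))
    (fun a => f a ∈ S.holders)
  rw [Finset.card_univ, ZMod.card] at hcard
  have := S.card_clique_add_two
  omega

end CycleFree

section Paths

theorem hasPathIn_clique (hx : x ∈ S.clique) (hy : y ∈ S.clique) (hxy : x ≠ y) {l : ℕ}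
    (hl : 1 ≤ l) (hlm : l + 3 ≤ m) : HasPathIn S.graph S.clique x y l :=
  hasPathIn_of_isClique isClique_graph hx hy hxy hl (by have := S.card_clique_add_two; omega)

theorem hasPathIn_holder_hub₂ (hw : w ∈ S.holders) {l : ℕ} (hl : 1 ≤ l) (hlm : l + 3 ≤ m) :
    HasPathIn S.graph (insert w S.clique) w S.hub₂ (l + 1) :=
  (hasPathIn_clique S.hub₁_mem S.hub₂_mem S.hub_ne hl hlm).cons (graph_adj_hub₁ hw)
    (notMem_clique hw)

theorem hasPathIn_leaf_hub₂ (hx : S.IsLeaf x) {l : ℕ} (hl : 1 ≤ l) (hlm : l + 3 ≤ m) :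
    HasPathIn S.graph (insert x (insert (S.attach x) S.clique)) x S.hub₂ (l + 2) :=
  (hasPathIn_holder_hub₂ hx.attach_mem hl hlm).cons hx.graph_adj_attach
    (by grind [IsLeaf, hx.attach_mem])

theorem hasPath_holder_holder (hm : 4 ≤ m) (hv : v ∈ S.holders) (hw : w ∈ S.holders)
    (hvw : v ≠ w) : HasPath S.graph v w (m - 1) := by
  obtain ⟨l, rfl⟩ := Nat.exists_eq_add_of_le' (show 3 ≤ m by omega)
  have h := hasPathIn_holder_hub₂ hv (l := l) (by omega) le_rfl
  exact (h.concat (graph_adj_hub₂ hw).symm (by grind [notMem_clique hw])).hasPath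

theorem hasPath_leaf_holder (hm : 5 ≤ m) (hx : S.IsLeaf x) (hw : w ∈ S.holders)
    (hxw : S.attach x ≠ w) : HasPath S.graph x w (m - 1) := by
  obtain ⟨l, rfl⟩ := Nat.exists_eq_add_of_le' (show 4 ≤ m by omega)
  have h := hasPathIn_leaf_hub₂ hx (l := l) (by omega) (by omega)
  exact (h.concat (graph_adj_hub₂ hw).symm (by grind [IsLeaf, notMem_clique hw])).hasPath

theorem hasPath_leaf_leaf_of_six_le (hm : 6 ≤ m) (hx : S.IsLeaf x) (hy : S.IsLeaf y)
    (hxy : S.attach x ≠ S.attach y) : HasPath S.graph x y (m - 1) := by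
  obtain ⟨l, rfl⟩ := Nat.exists_eq_add_of_le' (show 5 ≤ m by omega)
  have h := hasPathIn_leaf_hub₂ hx (l := l) (by omega) (by omega)
  refine ((h.concat (graph_adj_hub₂ hy.attach_mem).symm ?_).concat
    hy.graph_adj_attach.symm ?_).hasPath
  · grind [IsLeaf, hy.attach_mem, notMem_clique hy.attach_mem]
  · grind [IsLeaf, hx.attach_mem, hy.attach_mem]

theorem hasPath_leaf_leaf_four (hx : S.IsLeaf x) (hy : S.IsLeaf y)
    (hxy : S.attach x ≠ S.attach y) : HasPath S.graph x y 4 := by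
  have := hx.attach_mem
  have := hy.attach_mem
  have := S.hub₁_mem
  have := notMem_clique hx.attach_mem
  have := notMem_clique hy.attach_mem
  refine ((((hasPathIn_singleton x).concat hx.graph_adj_attach ?_).concat
    (graph_adj_hub₁ hx.attach_mem) ?_).concat (graph_adj_hub₁ hy.attach_mem).symm ?_).concat
      hy.graph_adj_attach.symm ?_ |>.hasPath
  all_goals grind [IsLeaf]

theorem hasPath_leaf_leaf (hm : 5 ≤ m) (hx : S.IsLeaf x) (hy : S.IsLeaf y)
    (hxy : S.attach x ≠ S.attach y) : HasPath S.graph x y (m - 1) := by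
  rcases hm.eq_or_lt with rfl | hm
  exacts [hasPath_leaf_leaf_four hx hy hxy, hasPath_leaf_leaf_of_six_le hm hx hy hxy]

theorem hasPath_leaf_clique (hm : 4 ≤ m) (hx : S.IsLeaf x) (hz : z ∈ S.clique) :
    HasPath S.graph x z (m - 1) := by
  obtain ⟨l, rfl⟩ := Nat.exists_eq_add_of_le' (show 3 ≤ m by omega)
  obtain ⟨y, hy, hyz, hadj⟩ : ∃ y ∈ S.clique, y ≠ z ∧ S.graph.Adj (S.attach x) y := by
    by_cases h : S.hub₁ = z
    · exact ⟨_, S.hub₂_mem, fun h' => S.hub_ne (h.trans h'.symm), graph_adj_hub₂ hx.attach_mem⟩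
    · exact ⟨_, S.hub₁_mem, h, graph_adj_hub₁ hx.attach_mem⟩
  have h := hasPathIn_clique hy hz hyz (l := l) (by omega) le_rfl
  refine ((h.cons hadj (notMem_clique hx.attach_mem)).cons hx.graph_adj_attach ?_).hasPath
  grind [IsLeaf, hx.attach_mem]

theorem hasPath_holder_clique (hm : 5 ≤ m) (hw : w ∈ S.holders) (hz : z ∈ S.clique)
    (hz₁ : z ≠ S.hub₁) (hz₂ : z ≠ S.hub₂) : HasPath S.graph w z (m - 1) := by
  classical
  have hcard := S.card_clique_add_two
  obtain ⟨l, rfl⟩ := Nat.exists_eq_add_of_le' (show 4 ≤ m by omega)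
  obtain ⟨v, hv, hvw⟩ := Finset.exists_mem_ne S.one_lt_card_holders w
  have h : HasPathIn S.graph (S.clique.erase S.hub₁) S.hub₂ z l :=
    hasPathIn_of_isClique (isClique_graph.subset (Finset.coe_subset.2 (Finset.erase_subset _ _)))
      (Finset.mem_erase.2 ⟨S.hub_ne.symm, S.hub₂_mem⟩) (Finset.mem_erase.2 ⟨hz₁, hz⟩) hz₂.symm
      (by omega) (by rw [Finset.card_erase_of_mem S.hub₁_mem]; omega)
  have := S.hub₁_mem
  have := notMem_clique hw
  have := notMem_clique hv
  refine ((h.cons (graph_adj_hub₂ hv) ?_).cons (graph_adj_hub₁ hv).symm ?_).cons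
    (graph_adj_hub₁ hw) ?_ |>.hasPath
  all_goals grind

end Paths

theorem hasPath_leaf_of_not_adj (hm : 5 ≤ m) (hx : S.IsLeaf x) (hadj : ¬ S.graph.Adj x y)
    (hattach : S.IsLeaf y → S.attach x ≠ S.attach y) : HasPath S.graph x y (m - 1) := by
  by_cases hy : S.IsLeaf y
  · exact hasPath_leaf_leaf hm hx hy (hattach hy)
  rcases mem_or_mem_of_not_isLeaf hy with hy | hy
  · exact hasPath_leaf_clique (by omega) hx hy
  · exact hasPath_leaf_holder hm hx hy fun h => hadj (h ▸ hx.graph_adj_attach)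

theorem hasPath_holder_of_not_adj (hm : 5 ≤ m) (hw : w ∈ S.holders) (hy : ¬ S.IsLeaf y)
    (hwy : w ≠ y) (hadj : ¬ S.graph.Adj w y) : HasPath S.graph w y (m - 1) := by
  rcases mem_or_mem_of_not_isLeaf hy with hy | hy
  · exact hasPath_holder_clique hm hw hy (fun h => hadj (h ▸ graph_adj_hub₁ hw))
      fun h => hadj (h ▸ graph_adj_hub₂ hw)
  · exact hasPath_holder_holder (by omega) hw hy hwy

theorem hasPath_of_not_adj (hm : 5 ≤ m) (hxy : x ≠ y) (hadj : ¬ S.graph.Adj x y)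
    (hattach : S.IsLeaf x → S.IsLeaf y → S.attach x ≠ S.attach y) :
    HasPath S.graph x y (m - 1) := by
  by_cases hx : S.IsLeaf x
  · exact hasPath_leaf_of_not_adj hm hx hadj (hattach hx)
  by_cases hy : S.IsLeaf y
  · exact (hasPath_leaf_of_not_adj hm hy (fun h => hadj h.symm) fun h => absurd h hx).symm
  rcases mem_or_mem_of_not_isLeaf hx with hxQ | hxW
  · rcases mem_or_mem_of_not_isLeaf hy with hyQ | hyW
    · exact absurd (isClique_graph hxQ hyQ hxy) hadj
    · exact (hasPath_holder_of_not_adj hm hyW hx hxy.symm fun h => hadj h.symm).symm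
  · exact hasPath_holder_of_not_adj hm hxW hy hxy hadj

theorem mem_edgeSet_graph_cases {e : Sym2 V} (he : e ∈ S.graph.edgeSet) :
    e ∈ S.clique.sym2 ∨ (∃ w ∈ S.holders, s(w, S.hub₁) = e ∨ s(w, S.hub₂) = e) ∨
      ∃ x, S.IsLeaf x ∧ s(x, S.attach x) = e := by
  have h {x y : V} : S.Rel x y → s(x, y) ∈ S.clique.sym2 ∨
      (∃ w ∈ S.holders, s(w, S.hub₁) = s(x, y) ∨ s(w, S.hub₂) = s(x, y)) ∨
      ∃ z, S.IsLeaf z ∧ s(z, S.attach z) = s(x, y) := by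
    rintro (hQ | ⟨hx, rfl | rfl⟩ | ⟨hx, rfl⟩)
    exacts [Or.inl (Finset.mk_mem_sym2_iff.2 hQ), Or.inr (Or.inl ⟨x, hx, Or.inl rfl⟩),
      Or.inr (Or.inl ⟨x, hx, Or.inr rfl⟩), Or.inr (Or.inr ⟨x, hx, rfl⟩)]
  induction e with
  | _ x y =>
    rcases he.2 with hxy | hyx
    exacts [h hxy, Sym2.eq_swap ▸ h hyx]

variable (S) in
theorem ncard_edgeSet_graph_le [Fintype V] :
    S.graph.edgeSet.ncard ≤ Fintype.card V + #S.holders + m ^ 2 := by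
  classical
  have hsub : S.graph.edgeSet ⊆ (S.clique.sym2 ∪ (S.holders.image (fun w => s(w, S.hub₁)) ∪
      S.holders.image (fun w => s(w, S.hub₂)) ∪
      (S.clique ∪ S.holders)ᶜ.image fun x => s(x, S.attach x)) : Finset (Sym2 V)) := by
    intro e he
    simp only [Finset.coe_union, Finset.coe_image, Set.mem_union, Set.mem_image, Finset.mem_coe,
      Finset.mem_compl, Finset.mem_union, not_or]
    rcases mem_edgeSet_graph_cases he with h | ⟨w, hw, h | h⟩ | ⟨x, hx, h⟩
    exacts [Or.inl h, Or.inr (Or.inl (Or.inl ⟨w, hw, h⟩)), Or.inr (Or.inl (Or.inr ⟨w, hw, h⟩)),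
      Or.inr (Or.inr ⟨x, hx, h⟩)]
  have hle := Set.ncard_le_ncard hsub (Set.toFinite _)
  rw [Set.ncard_coe_finset] at hle
  have hcompl := Finset.card_add_card_compl (S.clique ∪ S.holders)
  rw [Finset.card_union_of_disjoint S.disjoint] at hcompl
  have hclique : #S.clique.sym2 ≤ m ^ 2 := by
    rw [Finset.card_sym2]
    refine (Nat.choose_le_pow _ _).trans (Nat.pow_le_pow_left ?_ 2)
    have := S.card_clique_add_two
    omega
  grw [Finset.card_union_le, Finset.card_union_le, Finset.card_union_le, Finset.card_image_le,
    Finset.card_image_le, Finset.card_image_le] at hle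
  omega

-- The only edges of `G` that may have to be added join two leaves with a common holder.
theorem satNum_cycGraph_le [Fintype V] (S : Skeleton G m) (hm : 5 ≤ m) {B : Finset V}
    (hB : ∀ x y, S.IsLeaf x → S.IsLeaf y → S.attach x = S.attach y → G.Adj x y →
      x ∈ B ∧ y ∈ B) :
    satNum G (cycGraph m) ≤ Fintype.card V + #S.holders + m ^ 2 + (#B).choose 2 := by
  classical
  rw [← card_pairsIn]
  refine (satNum_le_ncard_edgeSet_add_card graph_le (S.not_containsCopy_cycGraph hm)
    fun x y hG hS => ?_).trans (Nat.add_le_add_right S.ncard_edgeSet_graph_le _)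
  by_cases hleaf : S.IsLeaf x → S.IsLeaf y → S.attach x ≠ S.attach y
  · exact Or.inr <| containsCopy_cycGraph_of_hasPath (by omega)
      ((hasPath_of_not_adj hm hG.ne hS hleaf).mono le_sup_left) (Or.inr ⟨rfl, hG.ne⟩)
  · push Not at hleaf
    obtain ⟨hx, hy, hxy⟩ := hleaf
    exact Or.inl (mk_mem_pairsIn.2 ⟨hB x y hx hy hxy hG, hG.ne⟩)

end Skeleton

end Skeleton

section Cliques

variable {V : Type*} [Fintype V] {G : SimpleGraph V} {j m s : ℕ}

theorem HasCommonNeighbors.anti (hG : HasCommonNeighbors G m s) (hj : j ≤ m)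
    (hm : m ≤ Fintype.card V) : HasCommonNeighbors G j s := by
  intro A hA
  obtain ⟨A', hAA', -, hA'⟩ := Finset.exists_subsuperset_card_eq A.subset_univ (hA.trans_le hj)
    (by simpa using hm)
  exact (hG A' hA').trans (Set.ncard_le_ncard fun v hv a ha => hv a (hAA' ha))

theorem HasCommonNeighbors.exists_forall_adj (hG : HasCommonNeighbors G m s) (hs : 1 ≤ s)
    (hm : m ≤ Fintype.card V) {A : Finset V} (hA : #A ≤ m) : ∃ v, ∀ a ∈ A, G.Adj a v := by
  obtain ⟨v, hv⟩ : {v | ∀ a ∈ A, G.Adj a v}.Nonempty := by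
    rw [← Set.ncard_pos]
    exact hs.trans (hG.anti hA hm A rfl)
  exact ⟨v, hv⟩

theorem HasCommonNeighbors.exists_isNClique (hG : HasCommonNeighbors G m s) (hs : 1 ≤ s)
    (hm : m ≤ Fintype.card V) (hj : j ≤ m) : ∃ Q, G.IsNClique j Q := by
  classical
  induction j with
  | zero => exact ⟨∅, by simp⟩
  | succ j ih =>
    obtain ⟨Q, hQ⟩ := ih (by omega)
    obtain ⟨v, hv⟩ := hG.exists_forall_adj hs hm (hQ.card_eq.trans_le (Nat.le_of_lt hj))
    exact ⟨insert v Q, hQ.insert fun a ha => (hv a ha).symm⟩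

end Cliques

section StarPartition

variable {V : Type*} {G : SimpleGraph V}

/-- The assignment `φ` partitions `U` into the leaf sets of stars of `G` that have their centres in
`P` and whose leaves are pairwise nonadjacent. -/
structure IsStarPartition (G : SimpleGraph V) (U P : Finset V) (φ : V → V) : Prop where
  mem ⦃x : V⦄ : x ∈ U → φ x ∈ P
  adj ⦃x : V⦄ : x ∈ U → G.Adj x (φ x)
  not_adj ⦃x y : V⦄ : x ∈ U → y ∈ U → φ x = φ y → ¬ G.Adj x y

theorem IsStarPartition.mono {U P P' : Finset V} {φ : V → V} (h : IsStarPartition G U P φ)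
    (hP : P ⊆ P') : IsStarPartition G U P' φ :=
  ⟨fun _ hx => hP (h.mem hx), h.adj, h.not_adj⟩

theorem hasLocalIndepSets_one_one (G : SimpleGraph V) : HasLocalIndepSets G 1 1 := by
  intro A hA
  obtain ⟨a, rfl⟩ := Finset.card_eq_one.1 hA
  exact ⟨{a}, subset_rfl, by simp [SimpleGraph.isNIndepSet_iff]⟩

variable [DecidableEq V] {U P : Finset V} {t u k j : ℕ}

theorem IsStarPartition.union {U' P' : Finset V} {φ φ' : V → V} (h : IsStarPartition G U P φ)
    (h' : IsStarPartition G U' P' φ') (hP : Disjoint P P') :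
    IsStarPartition G (U ∪ U') (P ∪ P') (U.piecewise φ φ') := by
  have hne {x y : V} (hx : x ∈ U) (hy : y ∈ U') : φ x ≠ φ' y :=
    hP.forall_ne_finset (h.mem hx) (h'.mem hy)
  constructor
  · intro x hx
    have := @h.mem x
    have := @h'.mem x
    grind [Finset.piecewise]
  · intro x hx
    have := @h.adj x
    have := @h'.adj x
    grind [Finset.piecewise]
  · intro x y hx hy hxy
    have := @h.not_adj x y
    have := @h'.not_adj x y
    grind [Finset.piecewise]

omit [DecidableEq V] in
theorem IsBiholeFree.exists_le_card_filter_adj [DecidableRel G.Adj] (hG : IsBiholeFree G t)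
    (hP : t ≤ #P) (hU : t * u + t ≤ #U) (hPU : Disjoint P U) :
    ∃ w ∈ P, u ≤ #{x ∈ U | G.Adj w x} := by
  classical
  by_contra! hdeg
  obtain ⟨P', hP'P, hP'⟩ := Finset.exists_subset_card_eq hP
  let N : Finset V := P'.biUnion fun w => {x ∈ U | G.Adj w x}
  have hN : #N ≤ t * u := hP' ▸ Finset.card_biUnion_le_card_mul _ _ _ fun w hw =>
    (hdeg w (hP'P hw)).le
  have hUN : t ≤ #(U \ N) := by
    have := Finset.le_card_sdiff N U
    omega
  obtain ⟨w, hw, x, hx, hwx⟩ := hG.exists_adj hP'.ge hUN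
    (Finset.disjoint_of_subset_left hP'P (Finset.disjoint_of_subset_right Finset.sdiff_subset hPU))
  rw [Finset.mem_sdiff] at hx
  exact hx.2 (Finset.mem_biUnion.2 ⟨w, hw, Finset.mem_filter.2 ⟨hx.1, hwx⟩⟩)

/-- The stars are chosen greedily: as long as many vertices remain, some unused centre has many
neighbours among them, which contain an independent set of size `k`. -/
theorem IsBiholeFree.exists_isStarPartition (hG : IsBiholeFree G t)
    (hindep : HasLocalIndepSets G u k) (hPU : Disjoint P U) (hj : j + t ≤ #P) :
    ∃ U' ⊆ U, ∃ P' ⊆ P, ∃ φ, #P' ≤ j ∧ IsStarPartition G U' P' φ ∧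
      (#(U \ U') < t * u + t ∨ j * k ≤ #U') := by
  classical
  induction j with
  | zero => exact ⟨∅, by simp, ∅, by simp, id, by simp, ⟨by simp, by simp, by simp⟩, by simp⟩
  | succ j ih =>
    obtain ⟨U', hU', P', hP', φ, hcard, hφ, hrest | hlarge⟩ := ih (by omega)
    · exact ⟨U', hU', P', hP', φ, by omega, hφ, Or.inl hrest⟩
    by_cases hrest : #(U \ U') < t * u + t
    · exact ⟨U', hU', P', hP', φ, by omega, hφ, Or.inl hrest⟩
    obtain ⟨w, hw, hwu⟩ := hG.exists_le_card_filter_adj (P := P \ P') (U := U \ U') (u := u)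
      (by have := Finset.le_card_sdiff P' P; omega) (by omega)
      (Finset.disjoint_of_subset_left Finset.sdiff_subset
        (Finset.disjoint_of_subset_right Finset.sdiff_subset hPU))
    obtain ⟨A, hA, hAu⟩ := Finset.exists_subset_card_eq hwu
    obtain ⟨I, hIA, hI, hIk⟩ := hindep A hAu
    have hIU {x : V} (hx : x ∈ I) : (x ∈ U ∧ x ∉ U') ∧ G.Adj w x := by
      simpa using hA (hIA hx)
    rw [Finset.mem_sdiff] at hw
    have hstar : IsStarPartition G I {w} fun _ => w :=
      ⟨by simp, fun x hx => (hIU hx).2.symm, fun x y hx hy _ hxy => hI hx hy hxy.ne hxy⟩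
    refine ⟨U' ∪ I, Finset.union_subset hU' fun x hx => (hIU hx).1.1, P' ∪ {w},
      Finset.union_subset hP' (by simpa using hw.1), _, ?_, hφ.union hstar (by simpa using hw.2),
      Or.inr ?_⟩
    · have := Finset.card_union_le P' {w}
      rw [Finset.card_singleton] at this
      omega
    · rw [Finset.card_union_of_disjoint (Finset.disjoint_right.2 fun x hx => (hIU hx).1.2), hIk]
      linarith

/-- The vertices that are left over by the stars with `k` leaves are few, and are covered by
stars with a single leaf. -/
theorem IsBiholeFree.exists_isStarPartition_card_sdiff_le (hG : IsBiholeFree G t)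
    (hindep : HasLocalIndepSets G u k) (hPU : Disjoint P U) (hU : #U < j * k)
    (hP : j + (t * u + t) + t ≤ #P) :
    ∃ U' ⊆ U, ∃ φ, IsStarPartition G U' P φ ∧ #(U \ U') ≤ 2 * t := by
  obtain ⟨U₁, hU₁, P₁, hP₁, φ₁, hcard₁, hφ₁, hrest₁⟩ :=
    hG.exists_isStarPartition hindep hPU (j := j) (by omega)
  have := Finset.card_le_card hU₁
  replace hrest₁ := hrest₁.resolve_right (by omega)
  obtain ⟨U₂, hU₂, P₂, hP₂, φ₂, -, hφ₂, hrest₂⟩ :=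
    hG.exists_isStarPartition (hasLocalIndepSets_one_one G) (P := P \ P₁) (U := U \ U₁)
      (Finset.disjoint_of_subset_left Finset.sdiff_subset
        (Finset.disjoint_of_subset_right Finset.sdiff_subset hPU)) (j := t * u + t)
      (by have := Finset.le_card_sdiff P₁ P; omega)
  have := Finset.card_le_card hU₂
  replace hrest₂ := hrest₂.resolve_right (by omega)
  rw [Finset.subset_sdiff] at hP₂
  refine ⟨U₁ ∪ U₂, Finset.union_subset hU₁ (hU₂.trans Finset.sdiff_subset), _,
    (hφ₁.union hφ₂ hP₂.2.symm).mono (Finset.union_subset hP₁ hP₂.1), ?_⟩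
  rw [← Finset.sup_eq_union, ← sdiff_sdiff_left]
  omega

end StarPartition

section UpperBound

variable {V : Type*} {G : SimpleGraph V} {m t u k d : ℕ}

theorem IsStarPartition.exists_skeleton [DecidableEq V] {U W Q R : Finset V} {φ : V → V}
    (hφ : IsStarPartition G U W φ) (hQ : G.IsNClique m Q) (hm : 2 ≤ m) (hW : 1 < #W)
    (hRW : Disjoint R W) (hQRW : ∀ w ∈ R ∪ W, ∀ q ∈ Q, G.Adj w q)
    (hdom : ∀ x ∉ R, ∃ r ∈ R, G.Adj x r) :
    ∃ S : Skeleton G (m + 2), S.clique = Q ∧ S.holders = R ∪ W ∧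
      ∀ x y, S.IsLeaf x → S.IsLeaf y → S.attach x = S.attach y → G.Adj x y → x ∉ U ∧ y ∉ U := by
  obtain ⟨a, b, ha, hb, hab⟩ := Finset.one_lt_card_iff.1 (hm.trans_eq hQ.card_eq.symm)
  choose! ρ hρR hρ using hdom
  let S : Skeleton G (m + 2) :=
    { clique := Q
      holders := R ∪ W
      hub₁ := a
      hub₂ := b
      attach := U.piecewise φ ρ
      card_clique_add_two := by rw [hQ.card_eq]
      isClique := hQ.isClique
      hub₁_mem := ha
      hub₂_mem := hb
      hub_ne := hab
      disjoint := Finset.disjoint_left.2 fun q hq hw => (hQRW q hw q hq).ne rfl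
      one_lt_card_holders := hW.trans_le (Finset.card_le_card Finset.subset_union_right)
      adj_hub₁ := fun w hw => hQRW w hw a ha
      adj_hub₂ := fun w hw => hQRW w hw b hb
      attach_mem := fun x _ hx => by grind [Finset.piecewise, hφ.mem]
      adj_attach := fun x _ hx => by grind [Finset.piecewise, hφ.adj] }
  refine ⟨S, rfl, rfl, fun x y hx hy hxy hadj => ?_⟩
  have hattach {z : V} (hz : S.IsLeaf z) : S.attach z ∈ W ↔ z ∈ U := by
    have := @hφ.mem z
    have : ρ z ∈ R → ρ z ∉ W := fun h => Finset.disjoint_left.1 hRW h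
    grind [Finset.piecewise, Skeleton.IsLeaf]
  have hU : x ∈ U ↔ y ∈ U := by rw [← hattach hx, ← hattach hy, hxy]
  have hxU : x ∉ U := fun h => hφ.not_adj h (hU.1 h)
    (by simpa [S, h, hU.1 h] using hxy) hadj
  exact ⟨hxU, mt hU.2 hxU⟩

variable [Fintype V]

theorem IsBiholeFree.exists_skeleton (hG : IsBiholeFree G t) (hm : 2 ≤ m)
    (hmV : m + 2 ≤ Fintype.card V) (ht : 1 ≤ t) (hd : Fintype.card V < d * k)
    (hcommon : HasCommonNeighbors G (m + 2) (d + t * u + 4 * t))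
    (hindep : HasLocalIndepSets G u k) :
    ∃ S : Skeleton G (m + 2), #S.holders ≤ d + t * u + 4 * t ∧ ∃ B : Finset V, #B ≤ 2 * t ∧
      ∀ x y, S.IsLeaf x → S.IsLeaf y → S.attach x = S.attach y → G.Adj x y → x ∈ B ∧ y ∈ B := by
  classical
  obtain ⟨Q, hQ⟩ := hcommon.exists_isNClique (by omega) hmV (Nat.le_add_right m 2)
  let N : Finset V := {v | ∀ q ∈ Q, G.Adj q v}
  have hN : d + t * u + 4 * t ≤ #N := by
    simpa [N, ← Set.ncard_coe_finset] using hcommon.anti (Nat.le_add_right m 2) hmV Q hQ.card_eq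
  obtain ⟨R, hRN, hR, hdom⟩ := hG.exists_dominating (S := N) (by omega) fun x _ => by
    have hxQ : #(insert x Q) ≤ m + 2 := by
      have := Finset.card_insert_le x Q
      have := hQ.card_eq
      omega
    obtain ⟨w, hw⟩ := hcommon.exists_forall_adj (by omega) hmV hxQ
    simp only [Finset.forall_mem_insert] at hw
    exact ⟨w, by simpa [N] using hw.2, hw.1⟩
  obtain ⟨W, hW, hWcard⟩ := Finset.exists_subset_card_eq (s := N \ R)
    (n := d + (t * u + t) + t) (by have := Finset.le_card_sdiff R N; omega)
  rw [Finset.subset_sdiff] at hW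
  obtain ⟨U, -, φ, hφ, hrest⟩ := hG.exists_isStarPartition_card_sdiff_le hindep
    (P := W) (U := (Q ∪ (R ∪ W))ᶜ) (Finset.disjoint_left.2 fun x hx => by simp [hx])
    ((Finset.card_le_univ _).trans_lt hd) hWcard.ge
  obtain ⟨S, hSQ, hSRW, hS⟩ := hφ.exists_skeleton hQ hm (by omega) hW.2.symm
    (fun w hw q hq => by
      have : w ∈ N := Finset.union_subset hRN hW.1 hw
      exact ((Finset.mem_filter.1 this).2 q hq).symm) hdom
  refine ⟨S, ?_, _, hrest, fun x y hx hy hxy hadj => ?_⟩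
  · have := Finset.card_union_le R W
    rw [hSRW]
    omega
  · have hmem {z : V} (hz : S.IsLeaf z) (hzU : z ∉ U) : z ∈ (Q ∪ (R ∪ W))ᶜ \ U := by
      rw [Finset.mem_sdiff, Finset.mem_compl, Finset.mem_union, ← hSQ, ← hSRW, not_or]
      exact ⟨hz, hzU⟩
    exact (hS x y hx hy hxy hadj).imp (hmem hx) (hmem hy)

theorem satNum_cycGraph_le (hm : 5 ≤ m) (hmV : m ≤ Fintype.card V) (ht : 1 ≤ t)
    (hd : Fintype.card V < d * k) (hbihole : IsBiholeFree G t)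
    (hcommon : HasCommonNeighbors G m (d + t * u + 4 * t)) (hindep : HasLocalIndepSets G u k) :
    satNum G (cycGraph m) ≤ Fintype.card V + (d + t * u + 4 * t) + m ^ 2 + (2 * t) ^ 2 := by
  obtain ⟨l, rfl⟩ := Nat.exists_eq_add_of_le' (show 2 ≤ m by omega)
  obtain ⟨S, hS, B, hB, hleaf⟩ := hbihole.exists_skeleton (by omega) hmV ht hd hcommon hindep
  refine (S.satNum_cycGraph_le hm hleaf).trans ?_
  have := (Nat.choose_le_pow #B 2).trans (Nat.pow_le_pow_left hB 2)
  omega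

end UpperBound

section Asymptotics

variable {b : ℝ} (hb : 1 < b)

include hb in
theorem eventually_natCeil_mul_logb_le {c c' : ℝ} (hc : 0 ≤ c) (hcc' : c < c') :
    ∀ᶠ n : ℕ in atTop, (⌈c * logb b n⌉₊ : ℝ) ≤ c' * logb b n := by
  have hlogb := tendsto_logb_natCast_atTop hb
  filter_upwards [hlogb.eventually_ge_atTop 0,
    (hlogb.const_mul_atTop (sub_pos.2 hcc')).eventually_ge_atTop 1] with n hn0 hn
  linarith [Nat.ceil_lt_add_one (mul_nonneg hc hn0)]

include hb in
theorem eventually_mul_logb_le_natFloor {c c' : ℝ} (hcc' : c' < c) :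
    ∀ᶠ n : ℕ in atTop, c' * logb b n ≤ ⌊c * logb b n⌋₊ := by
  filter_upwards [((tendsto_logb_natCast_atTop hb).const_mul_atTop
    (sub_pos.2 hcc')).eventually_ge_atTop 1] with n hn
  linarith [Nat.lt_floor_add_one (c * logb b n)]

theorem isBigO_natCeil_rpow {s : ℝ} (hs : 0 ≤ s) :
    (fun n : ℕ => (⌈(n : ℝ) ^ s⌉₊ : ℝ)) =O[atTop] fun n : ℕ => (n : ℝ) ^ s := by
  refine .of_bound 2 ?_
  filter_upwards [eventually_ge_atTop 1] with n hn
  have hns : 1 ≤ (n : ℝ) ^ s := one_le_rpow (mod_cast hn) hs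
  rw [RCLike.norm_natCast, norm_of_nonneg (by linarith)]
  linarith [Nat.ceil_lt_add_one (zero_le_one.trans hns)]

variable {t u k : ℕ → ℕ}

theorem isLittleO_lowerOrder_mul (m : ℕ) {δ : ℝ} (hδ : 0 < δ)
    (ht : (fun n => (t n : ℝ)) =O[atTop] fun n : ℕ => log n)
    (hu : (fun n => (u n : ℝ)) =O[atTop] fun n : ℕ => (n : ℝ) ^ (1 - δ)) :
    (fun n => (1 + t n * u n + 4 * t n + m ^ 2 + (2 * t n) ^ 2 : ℝ) * t n) =o[atTop]
      fun n : ℕ => (n : ℝ) := by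
  have hpow (j : ℕ) : (fun n => (t n : ℝ) ^ j) =o[atTop] fun n : ℕ => (n : ℝ) := by
    simpa using isLittleO_pow_natCast_rpow ht j one_pos
  have hmul : (fun n => (t n : ℝ) ^ 2 * u n) =o[atTop] fun n : ℕ => (n : ℝ) := by
    refine ((isLittleO_pow_natCast_rpow ht 2 hδ).mul_isBigO hu).congr' .rfl ?_
    filter_upwards [eventually_gt_atTop 0] with n hn
    rw [← rpow_add (Nat.cast_pos.2 hn), add_sub_cancel, rpow_one]
  refine (((hpow 1).const_mul_left (1 + m ^ 2)).add (hmul.add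
    (((hpow 2).const_mul_left 4).add ((hpow 3).const_mul_left 4)))).congr_left fun n => ?_
  ring

include hb in
theorem eventually_div_add_lowerOrder_le (m : ℕ) {δ η ε : ℝ} (hδ : 0 < δ) (hη : 0 < η)
    (hη1 : η ≤ 1 / 3) (hηε : 2 * η ≤ ε) (htL : ∀ᶠ n : ℕ in atTop, logb b n ≤ t n)
    (ht : (fun n => (t n : ℝ)) =O[atTop] fun n : ℕ => log n)
    (hu : (fun n => (u n : ℝ)) =O[atTop] fun n : ℕ => (n : ℝ) ^ (1 - δ))
    (hk : ∀ᶠ n : ℕ in atTop, (2 - 2 * η) * logb b n ≤ k n) :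
    ∀ᶠ n : ℕ in atTop,
      ((n / k n + 1 + t n * u n + 4 * t n + m ^ 2 + (2 * t n) ^ 2 : ℕ) : ℝ) ≤
        (1 + ε) * n / (2 * logb b n) := by
  filter_upwards [htL, hk, (tendsto_logb_natCast_atTop hb).eventually_gt_atTop 0,
    (isLittleO_lowerOrder_mul m hδ ht hu).bound (div_pos hη four_pos)] with n htL hk hL hrest
  rw [RCLike.norm_natCast] at hrest
  simp only [Nat.cast_add, Nat.cast_mul, Nat.cast_pow, Nat.cast_one, Nat.cast_ofNat, add_assoc]
    at hrest ⊢
  generalize logb b n = L at *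
  generalize (1 + (t n * u n + (4 * t n + (m ^ 2 + (2 * t n) ^ 2))) : ℝ) = r at *
  have hkη : 0 < 2 - 2 * η := by linarith
  have hmain : ((n / k n : ℕ) : ℝ) ≤ (1 + 3 / 2 * η) * n / (2 * L) := by
    calc ((n / k n : ℕ) : ℝ) ≤ n / k n := Nat.cast_div_le
      _ ≤ n / ((2 - 2 * η) * L) := by gcongr
      _ ≤ (1 + 3 / 2 * η) * n / (2 * L) := by
        rw [div_le_div_iff₀ (by positivity) (by positivity)]
        have : 2 ≤ (1 + 3 / 2 * η) * (2 - 2 * η) := by nlinarith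
        have := mul_le_mul_of_nonneg_right this (mul_nonneg n.cast_nonneg hL.le)
        linarith
  have hrest : r ≤ η / 2 * n / (2 * L) := by
    rw [le_div_iff₀ (by positivity)]
    calc r * (2 * L) ≤ |r| * (2 * t n) := by gcongr; exact le_abs_self r
      _ = 2 * ‖r * t n‖ := by rw [norm_mul, RCLike.norm_natCast, norm_eq_abs]; ring
      _ ≤ η / 2 * n := by linarith
  calc (n / k n : ℕ) + r ≤ (1 + 3 / 2 * η) * n / (2 * L) + η / 2 * n / (2 * L) := by gcongr
    _ = (1 + 2 * η) * n / (2 * L) := by ring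
    _ ≤ (1 + ε) * n / (2 * L) := by gcongr

include hb in
theorem eventually_mul_div_logb_le (a : ℝ) {c : ℝ} (hc : 0 < c) :
    ∀ᶠ n : ℕ in atTop, a * n / (2 * logb b n) ≤ c * n := by
  have hlogb := tendsto_logb_natCast_atTop hb
  filter_upwards [hlogb.eventually_gt_atTop 0,
    (hlogb.const_mul_atTop (mul_pos two_pos hc)).eventually_ge_atTop a] with n hL ha
  rw [div_le_iff₀ (by positivity)]
  linarith [mul_le_mul_of_nonneg_right ha n.cast_nonneg]

theorem add_one_sub_mul_div_le {m : ℕ} (hm : 2 ≤ m) {n e t L η ε : ℝ} (ht : 1 ≤ t) (hL : 0 < L)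
    (hη : 0 ≤ η) (hη1 : η ≤ 1) (hηε : 2 * η ≤ ε) (htL : t ≤ (2 + 2 * η) * L)
    (hsmall : 7 * m * t ^ m ≤ η * n)
    (h : n ≤ (2 * t + 2 * ((m : ℝ) - 1) * (e - n + 2 * t)) * t + 3 * (m * t ^ (m - 1))) :
    n + (1 - ε) * n / (4 * ((m : ℝ) - 1) * L) ≤ e := by
  have hm1 : (0 : ℝ) < m - 1 := by
    have : (2 : ℝ) ≤ m := mod_cast hm
    linarith
  have hn : 0 < n := pos_of_mul_pos_right ((by positivity : 0 < 7 * m * t ^ m).trans_le hsmall) hη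
  have herror : 2 * t ^ 2 + 4 * ((m : ℝ) - 1) * t ^ 2 + 3 * (m * t ^ (m - 1)) ≤ 7 * m * t ^ m := by
    have h₁ : t ^ (m - 1) ≤ t ^ m := pow_le_pow_right₀ ht (Nat.sub_le _ _)
    have h₂ : t ^ 2 ≤ t ^ m := pow_le_pow_right₀ ht hm
    calc 2 * t ^ 2 + 4 * ((m : ℝ) - 1) * t ^ 2 + 3 * (m * t ^ (m - 1))
        ≤ 4 * m * t ^ 2 + 3 * (m * t ^ (m - 1)) := by linarith [sq_nonneg t]
      _ ≤ 4 * m * t ^ m + 3 * (m * t ^ m) := by gcongr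
      _ = 7 * m * t ^ m := by ring
  have hexcess : (1 - η) * n ≤ 2 * ((m : ℝ) - 1) * t * (e - n) := by linarith
  have he : 0 ≤ e - n := by
    refine nonneg_of_mul_nonneg_right ((mul_nonneg (sub_nonneg.2 hη1) hn.le).trans hexcess) ?_
    positivity
  suffices (1 - ε) * n / (4 * ((m : ℝ) - 1) * L) ≤ e - n by linarith
  rw [div_le_iff₀ (by positivity)]
  refine le_of_mul_le_mul_right ?_ (by linarith : 0 < 1 + η)
  calc (1 - ε) * n * (1 + η) ≤ (1 - 2 * η) * n * (1 + η) := by gcongr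
    _ ≤ (1 - η) * n := by nlinarith [mul_nonneg hn.le (sq_nonneg η)]
    _ ≤ 2 * ((m : ℝ) - 1) * t * (e - n) := hexcess
    _ ≤ 2 * ((m : ℝ) - 1) * ((2 + 2 * η) * L) * (e - n) := by gcongr
    _ = (e - n) * (4 * ((m : ℝ) - 1) * L) * (1 + η) := by ring

end Asymptotics

section Main

variable {p : ℝ} (hp0 : 0 < p) (hp1 : p < 1) {m : ℕ} (hm : 5 ≤ m) {ε : ℝ}
include hp0 hp1 hm

theorem holdsWhp_le_satNum_cycGraph (hε : 0 < ε) : HoldsWhp p fun n G =>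
    (n : ℝ) + (1 - ε) * n / (4 * ((m : ℝ) - 1) * logb (1 / (1 - p)) n) ≤
      satNum G (cycGraph m) := by
  obtain ⟨η, hη0, hη⟩ := exists_between (lt_min (half_pos hε) one_pos)
  obtain ⟨hηε, hη1⟩ := lt_min_iff.1 hη
  have hb : 1 < 1 / (1 - p) := one_lt_one_div (sub_pos.2 hp1) (sub_lt_self 1 hp0)
  have htle := eventually_natCeil_mul_logb_le hb (c := 2 + η) (c' := 2 + 2 * η) (by positivity)
    (by linarith)
  have htO := isBigO_log_of_le_mul_logb htle
  have hsmall := (isLittleO_pow_natCast_rpow htO m one_pos).bound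
    (show 0 < η / (7 * m) by positivity)
  have htge : ∀ᶠ n : ℕ in atTop, (2 + η) * logb (1 / (1 - p)) n ≤
      ⌈(2 + η) * logb (1 / (1 - p)) n⌉₊ := .of_forall fun _ => Nat.le_ceil _
  refine ((holdsWhp_isLocallyDense hp0 hp1 hη0 htge htO).and
    (holdsWhp_isBiholeFree hp0 hp1 hη0 htge)).mono ?_
  filter_upwards [htle, hsmall, (tendsto_logb_natCast_atTop hb).eventually_gt_atTop 0,
    (isLittleO_pow_natCast_rpow htO 1 one_pos).eventuallyLE] with n htle hsmall hL htn G
    ⟨hdense, hbihole⟩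
  simp only [pow_one, rpow_one, norm_pow, RCLike.norm_natCast] at hsmall htn
  have ht1 : 1 ≤ ⌈(2 + η) * logb (1 / (1 - p)) n⌉₊ := Nat.ceil_pos.2 (by positivity)
  obtain ⟨H, hH, hcard⟩ := exists_isSaturatedIn_ncard_edgeSet_eq_satNum G
    (cycGraph_ne_bot (m := m) (by omega))
  have hbound := card_le_of_isSaturatedIn_cycGraph hm ht1 (by simpa using htn) hdense hbihole hH
  rw [hcard, Fintype.card_fin] at hbound
  refine add_one_sub_mul_div_le (by omega) (mod_cast ht1) hL hη0.le hη1.le (by linarith) htle ?_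
    hbound
  calc 7 * m * (⌈(2 + η) * logb (1 / (1 - p)) n⌉₊ : ℝ) ^ m
      ≤ 7 * m * (η / (7 * m) * n) := by gcongr
    _ = η * n := by field_simp

theorem holdsWhp_satNum_cycGraph_le_of_isBigO {η : ℝ} (hη : 0 < η) (hη1 : η ≤ 1 / 3)
    (hηε : 2 * η ≤ ε) {t u k : ℕ → ℕ}
    (htL : ∀ᶠ n : ℕ in atTop, (2 + η) * logb (1 / (1 - p)) n ≤ t n)
    (ht : (fun n => (t n : ℝ)) =O[atTop] fun n : ℕ => log n)
    (hun : ∀ᶠ n : ℕ in atTop, (n : ℝ) ^ (1 - η / 8) ≤ u n)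
    (hu : (fun n => (u n : ℝ)) =O[atTop] fun n : ℕ => (n : ℝ) ^ (1 - η / 8))
    (hkL : ∀ᶠ n : ℕ in atTop, (k n : ℝ) ≤ (2 - η) * logb (1 / (1 - p)) n)
    (hk : ∀ᶠ n : ℕ in atTop, (2 - 2 * η) * logb (1 / (1 - p)) n ≤ k n) :
    HoldsWhp p fun n G =>
      (satNum G (cycGraph m) : ℝ) ≤ n + (1 + ε) * n / (2 * logb (1 / (1 - p)) n) := by
  have hb : 1 < 1 / (1 - p) := one_lt_one_div (sub_pos.2 hp1) (sub_lt_self 1 hp0)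
  have hlogb := tendsto_logb_natCast_atTop hb
  have htL' : ∀ᶠ n : ℕ in atTop, logb (1 / (1 - p)) n ≤ t n := by
    filter_upwards [htL, hlogb.eventually_ge_atTop 0] with n htn hn
    nlinarith
  have htop : Tendsto t atTop atTop :=
    tendsto_natCast_atTop_iff.1 (tendsto_atTop_mono' _ htL' hlogb)
  have hktop : Tendsto k atTop atTop := tendsto_natCast_atTop_iff.1 <|
    tendsto_atTop_mono' _ hk (hlogb.const_mul_atTop (by linarith))
  have hcost := eventually_div_add_lowerOrder_le hb m (by linarith : 0 < η / 8) hη hη1 hηε htL'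
    ht hu hk
  have hcentres : ∀ᶠ n : ℕ in atTop,
      ((n / k n + 1 + t n * u n + 4 * t n : ℕ) : ℝ) ≤ p ^ m / 2 * n := by
    filter_upwards [hcost, eventually_mul_div_logb_le hb (1 + ε)
      (half_pos (pow_pos hp0 m))] with n hn hle
    refine le_trans (Nat.cast_le.2 ?_) (hn.trans hle)
    omega
  refine (((holdsWhp_isBiholeFree hp0 hp1 hη htL).and (holdsWhp_hasCommonNeighbors hp0 hp1
    (by omega) (half_lt_self (by positivity)) hcentres)).and (holdsWhp_hasLocalIndepSets hp0 hp1
    (by linarith) (by linarith) (by linarith) hktop hkL hun)).mono ?_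
  filter_upwards [hcost, htop.eventually_ge_atTop 1, hktop.eventually_ge_atTop 1,
    eventually_ge_atTop m] with n hcost ht hk hmn G ⟨⟨hbihole, hcommon⟩, hindep⟩
  have hsat := satNum_cycGraph_le hm (by simpa using hmn) ht
    (by simpa [mul_comm] using Nat.lt_mul_div_succ n hk) hbihole hcommon hindep
  rw [Fintype.card_fin, ← Nat.cast_le (α := ℝ)] at hsat
  push_cast at hsat hcost
  linarith

theorem holdsWhp_satNum_cycGraph_le (hε : 0 < ε) : HoldsWhp p fun n G =>
    (satNum G (cycGraph m) : ℝ) ≤ n + (1 + ε) * n / (2 * logb (1 / (1 - p)) n) := by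
  obtain ⟨η, hη0, hη⟩ := exists_between (lt_min (half_pos hε) (by norm_num : (0 : ℝ) < 1 / 3))
  obtain ⟨hηε, hη1⟩ := lt_min_iff.1 hη
  have hb : 1 < 1 / (1 - p) := one_lt_one_div (sub_pos.2 hp1) (sub_lt_self 1 hp0)
  refine holdsWhp_satNum_cycGraph_le_of_isBigO hp0 hp1 hm hη0 hη1.le (by linarith)
    (t := fun n => ⌈(2 + η) * logb (1 / (1 - p)) n⌉₊) (u := fun n => ⌈(n : ℝ) ^ (1 - η / 8)⌉₊)
    (k := fun n => ⌊(2 - η) * logb (1 / (1 - p)) n⌋₊)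
    (.of_forall fun _ => Nat.le_ceil _)
    (isBigO_log_of_le_mul_logb
      (eventually_natCeil_mul_logb_le hb (by linarith) (lt_add_one (2 + η))))
    (.of_forall fun _ => Nat.le_ceil _) (isBigO_natCeil_rpow (by linarith)) ?_
    (eventually_mul_logb_le_natFloor hb (by linarith))
  filter_upwards [(tendsto_logb_natCast_atTop hb).eventually_ge_atTop 0] with n hn
  exact Nat.floor_le (mul_nonneg (by linarith) hn)

end Main

/-- For fixed `p ∈ (0,1)` and fixed `m ≥ 5`, whp
`n + (1−o(1))·n/(4(m−1)·log_{1/(1−p)} n) ≤ sat(G(n,p), C_m) ≤ n + (1+o(1))·n/(2·log_{1/(1−p)} n)`.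
The `o(1)` terms are rendered by an arbitrary `ε > 0`. -/
theorem cycle_saturation_bounds (p : ℝ) (hp0 : 0 < p) (hp1 : p < 1)
    (m : ℕ) (hm : 5 ≤ m) (ε : ℝ) (hε : 0 < ε) :
    Tendsto (fun n : ℕ =>
      erMeasure n p {ω |
        (n : ℝ) + (1 - ε) * n / (4 * ((m : ℝ) - 1) * Real.logb (1 / (1 - p)) n)
            ≤ (satNum (graphOf ω) (cycGraph m) : ℝ) ∧
        (satNum (graphOf ω) (cycGraph m) : ℝ)
            ≤ (n : ℝ) + (1 + ε) * n / (2 * Real.logb (1 / (1 - p)) n)})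
      atTop (nhds 1) :=
  (holdsWhp_le_satNum_cycGraph hp0 hp1 hm hε).and (holdsWhp_satNum_cycGraph_le hp0 hp1 hm hε)
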